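/- Fix β ∈ (1+α, 2). There exist ε_* > 0 and a constant C > 0, independent of ε and of the profiles, such that for every ε ∈ (0, ε_*], every pair of normalised self-similar profiles φ¹_ε, φ²_ε for K_ε and every x > 0 one has |Φ[φ¹_ε](x) − Φ[φ²_ε](x)| ≤ C ε ω_{−α,α−1}(x) e^{−x} ‖φ¹_ε − φ²_ε‖_{X_{−α,β}}. -/

import Mathlib

open MeasureTheory Real Set Filter

noncomputable def weight (a b x : ℝ) : ℝ := if x ≤ 1 then x ^ a else x ^ b

noncomputable def Xnorm (a b : ℝ) (g : ℝ → ℝ) : ℝ :=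
  ∫ x in Ioi (0:ℝ), |g x| * weight a b x

def MemX (a b : ℝ) (g : ℝ → ℝ) : Prop :=
  IntegrableOn (fun x => g x * weight a b x) (Ioi 0)

noncomputable def Kern (ε : ℝ) (W : ℝ → ℝ → ℝ) (x y : ℝ) : ℝ := 2 + ε * W x y

def GoodW (α : ℝ) (W : ℝ → ℝ → ℝ) : Prop :=
  ContinuousOn (fun p : ℝ × ℝ => W p.1 p.2) (Ioi 0 ×ˢ Ioi 0) ∧
  (∀ x y : ℝ, 0 < x → 0 < y → W x y = W y x) ∧
  (∀ l x y : ℝ, 0 < l → 0 < x → 0 < y → W (l * x) (l * y) = W x y) ∧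
  (∀ x y : ℝ, 0 < x → 0 < y → 0 ≤ W x y ∧ W x y ≤ (x / y) ^ α + (y / x) ^ α)

def IsProfile (K : ℝ → ℝ → ℝ) (φ : ℝ → ℝ) : Prop :=
  LocallyIntegrableOn φ (Ioi 0) ∧
  (∀ᵐ x ∂(volume.restrict (Ioi (0:ℝ))), 0 ≤ φ x) ∧
  IntegrableOn (fun x => x * φ x) (Ioi 0) ∧
  (∀ᵐ x ∂(volume.restrict (Ioi (0:ℝ))),
    x ^ 2 * φ x = ∫ y in Ioo 0 x, ∫ z in Ioi (x - y), y * K y z * φ y * φ z)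

def IsNormalised (φ : ℝ → ℝ) : Prop := ∫ x in Ioi (0:ℝ), x * φ x = 1

noncomputable def betaW (W : ℝ → ℝ → ℝ) (φ : ℝ → ℝ) (x : ℝ) : ℝ :=
  ∫ z in Ioi (0:ℝ), W x z * φ z

noncomputable def Phi (ε : ℝ) (W : ℝ → ℝ → ℝ) (φ : ℝ → ℝ) (x : ℝ) : ℝ :=
  ε * ∫ y in Ioi x, betaW W φ y / y * exp (-y)

open scoped ENNReal

/-- Measure-theoretic reformulation of the profile equation. -/
structure GoodMeas (ν : Measure ℝ) (k : ℝ → ℝ → ℝ≥0∞) (α ε : ℝ) : Prop where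
  pos : ∀ᵐ x ∂ν, 0 < x
  noatom : ∀ x, ν {x} = 0
  meas : Measurable (Function.uncurry k)
  symm : ∀ y z, 0 < y → 0 < z → k y z = k z y
  lo : ∀ y z, 0 < y → 0 < z → 2 ≤ k y z
  hi : ∀ y z, 0 < y → 0 < z → k y z ≤ ENNReal.ofReal (2 + ε * ((y / z) ^ α + (z / y) ^ α))
  mass : ∫⁻ x, ENNReal.ofReal x ∂ν = 1
  test : ∀ g : ℝ → ℝ≥0∞, Measurable g → ∫⁻ x, ENNReal.ofReal (x ^ 2) * g x ∂ν =
    ∫⁻ y, ∫⁻ z, ENNReal.ofReal y * k y z * (∫⁻ x in Ioo y (y + z), g x) ∂ν ∂ν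

theorem dmono {ν : Measure ℝ} (hpos : ∀ᵐ x ∂ν, 0 < x) {F G : ℝ → ℝ → ℝ≥0∞}
    (h : ∀ y z, 0 < y → 0 < z → F y z ≤ G y z) :
    ∫⁻ y, ∫⁻ z, F y z ∂ν ∂ν ≤ ∫⁻ y, ∫⁻ z, G y z ∂ν ∂ν := by
  apply lintegral_mono_ae
  filter_upwards [hpos] with y hy
  apply lintegral_mono_ae
  filter_upwards [hpos] with z hz
  exact h y z hy hz

theorem dcongr {ν : Measure ℝ} (hpos : ∀ᵐ x ∂ν, 0 < x) {F G : ℝ → ℝ → ℝ≥0∞}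
    (h : ∀ y z, 0 < y → 0 < z → F y z = G y z) :
    ∫⁻ y, ∫⁻ z, F y z ∂ν ∂ν = ∫⁻ y, ∫⁻ z, G y z ∂ν ∂ν :=
  le_antisymm (dmono hpos fun y z hy hz => (h y z hy hz).le)
    (dmono hpos fun y z hy hz => (h y z hy hz).ge)

theorem lint_rpow (p a b : ℝ) (ha : 0 < a) (hab : a ≤ b) (hp : p ≠ -1) :
    ∫⁻ x in Ioo a b, ENNReal.ofReal (x ^ p) =
      ENNReal.ofReal ((b ^ (p + 1) - a ^ (p + 1)) / (p + 1)) := by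
  have h0 : (0:ℝ) ∉ uIcc a b := by
    rw [uIcc_of_le hab]; intro h; exact absurd h.1 (not_le.2 ha)
  rw [← integral_rpow (Or.inr ⟨hp, h0⟩), intervalIntegral.integral_of_le hab,
    restrict_Ioo_eq_restrict_Ioc, ofReal_integral_eq_lintegral_ofReal]
  · have := intervalIntegral.intervalIntegrable_rpow (μ := volume) (r := p) (Or.inr h0)
    rwa [intervalIntegrable_iff_integrableOn_Ioc_of_le hab] at this
  · filter_upwards [ae_restrict_mem measurableSet_Ioc] with x hx
    exact rpow_nonneg (ha.trans hx.1).le _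

theorem lint_inv_sq (a b : ℝ) (ha : 0 < a) (hab : a ≤ b) :
    ∫⁻ x in Ioo a b, ENNReal.ofReal ((x ^ 2)⁻¹) = ENNReal.ofReal (1 / a - 1 / b) := by
  have h := lint_rpow (-2) a b ha hab (by norm_num)
  have e : ∫⁻ x in Ioo a b, ENNReal.ofReal ((x ^ 2)⁻¹) =
      ∫⁻ x in Ioo a b, ENNReal.ofReal (x ^ (-2:ℝ)) := by
    apply setLIntegral_congr_fun measurableSet_Ioo
    intro x hx
    have hx0 : 0 < x := ha.trans hx.1
    simp only
    rw [rpow_neg hx0.le]; norm_num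
  rw [e, h]
  congr 1
  have hb : 0 < b := ha.trans_le hab
  norm_num
  rw [rpow_neg_one, rpow_neg_one]; ring

theorem GoodMeas.tail_finite {ν : Measure ℝ} {k : ℝ → ℝ → ℝ≥0∞} {α ε : ℝ}
    (h : GoodMeas ν k α ε) {s : ℝ} (hs : 0 < s) : ν (Ioi s) ≠ ∞ := by
  have h1 := mul_meas_ge_le_lintegral (μ := ν) ENNReal.measurable_ofReal (ENNReal.ofReal s)
  rw [h.mass] at h1
  have h2 : ν {x | ENNReal.ofReal s ≤ ENNReal.ofReal x} ≠ ∞ := by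
    intro ht
    rw [ht, ENNReal.mul_top (by simpa using hs)] at h1
    simp at h1
  refine ne_top_of_le_ne_top h2 (measure_mono fun x hx => ?_)
  exact ENNReal.ofReal_le_ofReal (le_of_lt hx)

theorem GoodMeas.test_tail {ν : Measure ℝ} {k : ℝ → ℝ → ℝ≥0∞} {α ε : ℝ}
    (h : GoodMeas ν k α ε) {s : ℝ} (hs : 0 < s) :
    ν (Ioi s) = ∫⁻ y, ∫⁻ z, k y z * ENNReal.ofReal (y / max y s - y / max (y + z) s) ∂ν ∂ν := by
  have h1 := h.test ((Ioi s).indicator fun x => ENNReal.ofReal ((x ^ 2)⁻¹))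
    (Measurable.indicator (by fun_prop) measurableSet_Ioi)
  have h2 : ∫⁻ x, ENNReal.ofReal (x ^ 2) *
      (Ioi s).indicator (fun x => ENNReal.ofReal ((x ^ 2)⁻¹)) x ∂ν = ν (Ioi s) := by
    rw [← lintegral_indicator_one measurableSet_Ioi]
    congr 1
    ext x
    by_cases hx : x ∈ Ioi s
    · have hx0 : 0 < x := hs.trans hx
      simp only [indicator_of_mem hx, Pi.one_apply]
      rw [← ENNReal.ofReal_mul (by positivity), mul_inv_cancel₀ (by positivity)]; simp
    · simp [indicator_of_notMem hx]
  rw [← h2, h1]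
  apply dcongr h.pos
  intro y z hy hz
  rw [lintegral_indicator measurableSet_Ioi, Measure.restrict_restrict measurableSet_Ioi]
  have hset : Ioi s ∩ Ioo y (y + z) = Ioo (max y s) (max (y + z) s) := by
    ext x
    simp only [mem_inter_iff, mem_Ioi, mem_Ioo, max_lt_iff, lt_max_iff]
    constructor
    · rintro ⟨a, b, c⟩; exact ⟨⟨b, a⟩, Or.inl c⟩
    · rintro ⟨⟨a, b⟩, c | c⟩
      · exact ⟨b, a, c⟩
      · exact absurd b (not_lt.2 c.le)
  rw [hset, lint_inv_sq _ _ (lt_max_of_lt_left hy) (max_le_max_right _ (by linarith)),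
    mul_comm (ENNReal.ofReal y), mul_assoc, ← ENNReal.ofReal_mul hy.le]
  congr 2; ring

theorem GoodMeas.test_tail_symm {ν : Measure ℝ} [SFinite ν] {k : ℝ → ℝ → ℝ≥0∞} {α ε : ℝ}
    (h : GoodMeas ν k α ε) {s : ℝ} (hs : 0 < s) :
    2 * ν (Ioi s) = ∫⁻ y, ∫⁻ z, k y z * (ENNReal.ofReal (y / max y s - y / max (y + z) s) +
      ENNReal.ofReal (z / max z s - z / max (y + z) s)) ∂ν ∂ν := by
  have hm := h.meas
  have h1 := h.test_tail hs
  have h2 : ν (Ioi s) = ∫⁻ y, ∫⁻ z, k y z *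
      ENNReal.ofReal (z / max z s - z / max (y + z) s) ∂ν ∂ν := by
    rw [h1, lintegral_lintegral_swap]
    · apply dcongr h.pos
      intro y z hy hz
      rw [h.symm z y hz hy, add_comm z y]
    · apply Measurable.aemeasurable
      apply Measurable.mul hm
      fun_prop
  rw [two_mul]
  have h3 : ν (Ioi s) + ν (Ioi s) = _ := congrArg₂ (· + ·) h1 h2
  rw [h3]
  rw [← lintegral_add_left]
  · congr 1
    ext y
    rw [← lintegral_add_left]
    · simp only [mul_add]
    · apply Measurable.mul (hm.comp (by fun_prop : Measurable fun z => (y, z)))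
      fun_prop
  · apply Measurable.lintegral_prod_right (f := fun y z => k y z * ENNReal.ofReal (y / max y s - y / max (y + z) s))
    apply Measurable.mul hm
    fun_prop

theorem GoodMeas.tail_le_one {ν : Measure ℝ} [SFinite ν] {k : ℝ → ℝ → ℝ≥0∞} {α ε : ℝ}
    (h : GoodMeas ν k α ε) {s : ℝ} (hs : 0 < s) : ν (Ioi s) ≤ 1 := by
  have hfin := h.tail_finite hs
  have h1 := h.test_tail_symm hs
  have h2 : 2 * (ν (Ioi s) * ν (Ioi s)) ≤ 2 * ν (Ioi s) := by
    have e : 2 * (ν (Ioi s) * ν (Ioi s)) = ∫⁻ y, ∫⁻ z, 2 * ((Ioi s).indicator 1 y *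
        (Ioi s).indicator 1 z) ∂ν ∂ν := by
      have hi : Measurable ((Ioi s).indicator (1 : ℝ → ℝ≥0∞)) :=
        measurable_one.indicator measurableSet_Ioi
      simp_rw [lintegral_const_mul' 2 _ (by simp : (2:ℝ≥0∞) ≠ ∞)]
      simp_rw [lintegral_const_mul _ hi]
      rw [lintegral_mul_const _ hi, lintegral_indicator_one measurableSet_Ioi]
    rw [e, h1]
    apply dmono h.pos
    intro y z hy hz
    by_cases hy' : y ∈ Ioi s
    swap
    · simp [indicator_of_notMem hy']
    by_cases hz' : z ∈ Ioi s
    swap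
    · simp [indicator_of_notMem hz']
    simp only [indicator_of_mem hy', indicator_of_mem hz', Pi.one_apply]
    refine mul_le_mul' (h.lo y z hy hz) ?_
    have hy2 : s < y := hy'
    have hz2 : s < z := hz'
    rw [max_eq_left hy2.le, max_eq_left hz2.le, max_eq_left (by linarith), ← ENNReal.ofReal_add]
    · rw [div_self hy.ne', div_self hz.ne', one_mul, ← ENNReal.ofReal_one]
      apply ENNReal.ofReal_le_ofReal
      have : 0 < y + z := by linarith
      have : y / (y + z) + z / (y + z) = 1 := by rw [← add_div]; exact div_self this.ne'
      linarith
    · rw [div_self hy.ne', sub_nonneg, div_le_one (by linarith)]; linarith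
    · rw [div_self hz.ne', sub_nonneg, div_le_one (by linarith)]; linarith
  by_contra hc
  push Not at hc
  have h3 : ν (Ioi s) * ν (Ioi s) ≤ ν (Ioi s) * 1 := by
    rw [mul_one]
    exact (ENNReal.mul_le_mul_iff_right (by simp) (by simp)).1 h2
  have h4 := (ENNReal.mul_le_mul_iff_right (by positivity) hfin).1 h3
  exact absurd hc (not_lt.2 h4)

theorem Ioi_zero_union : Ioi (0:ℝ) = ⋃ n : ℕ, Ioi (1 / ((n:ℝ) + 1)) := by
  ext x
  simp only [mem_Ioi, mem_iUnion]
  constructor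
  · intro hx; exact exists_nat_one_div_lt hx
  · rintro ⟨n, hn⟩; exact lt_trans (by positivity) hn

theorem GoodMeas.exists_tail {ν : Measure ℝ} {k : ℝ → ℝ → ℝ≥0∞} {α ε : ℝ}
    (h : GoodMeas ν k α ε) {c : ℝ≥0∞} (hc : c < ν univ) : ∃ s, 0 < s ∧ c < ν (Ioi s) := by
  have h0 : ν univ = ν (Ioi 0) := by
    apply measure_congr
    filter_upwards [h.pos] with x hx
    apply propext
    exact ⟨fun _ => hx, fun _ => trivial⟩
  rw [h0, Ioi_zero_union] at hc
  have hm : Monotone fun n : ℕ => Ioi (1 / ((n:ℝ) + 1)) := by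
    intro m n hmn
    apply Ioi_subset_Ioi
    apply one_div_le_one_div_of_le (by positivity)
    have : (m:ℝ) ≤ n := by exact_mod_cast hmn
    linarith
  rw [hm.measure_iUnion] at hc
  obtain ⟨n, hn⟩ := lt_iSup_iff.1 hc
  exact ⟨_, by positivity, hn⟩

theorem GoodMeas.univ_le_one {ν : Measure ℝ} [SFinite ν] {k : ℝ → ℝ → ℝ≥0∞} {α ε : ℝ}
    (h : GoodMeas ν k α ε) : ν univ ≤ 1 := by
  by_contra hc
  push Not at hc
  obtain ⟨s, hs, hs'⟩ := h.exists_tail hc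
  exact absurd hs' (not_lt.2 (h.tail_le_one hs))

theorem GoodMeas.low_bound {ν : Measure ℝ} [SFinite ν] {k : ℝ → ℝ → ℝ≥0∞} {α ε : ℝ}
    (h : GoodMeas ν k α ε) (hα : 0 < α) {s δ : ℝ} (hs : 0 < s) (hδ : 0 < δ)
    (hn : (1 + α) / 2 < (ν (Ioi s)).toReal) :
    ∫⁻ x in Ioo δ s, ENNReal.ofReal (x ^ (-α)) ∂ν ≤
      ENNReal.ofReal (2 * (ν (Ioi s)).toReal / (1 + α) * s ^ (-1 - α) /
        (2 * (ν (Ioi s)).toReal / (1 + α) - 1)) := by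
  have hfin := h.tail_finite hs
  set n := (ν (Ioi s)).toReal with hndef
  set θ := 2 * n / (1 + α) with hθ
  have hθ1 : 1 < θ := by rw [hθ, lt_div_iff₀ (by linarith)]; linarith
  set I := ∫⁻ x in Ioo δ s, ENNReal.ofReal (x ^ (-α)) ∂ν with hI
  set J := ∫⁻ y in Ioo δ s, ENNReal.ofReal (y ^ (-α) - y * s ^ (-1 - α)) ∂ν with hJ
  have hIfin : I ≠ ∞ := by
    have : I ≤ ∫⁻ x in Ioo δ s, ENNReal.ofReal (δ ^ (-α)) ∂ν := by
      apply setLIntegral_mono measurable_const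
      intro x hx
      apply ENNReal.ofReal_le_ofReal
      exact rpow_le_rpow_of_nonpos hδ hx.1.le (by linarith)
    refine ne_top_of_le_ne_top ?_ this
    rw [setLIntegral_const]
    refine ENNReal.mul_ne_top (by simp) (ne_top_of_le_ne_top (h.tail_finite hδ) ?_)
    exact measure_mono fun x hx => hx.1
  have hJI : J ≤ I := by
    apply setLIntegral_mono (by fun_prop)
    intro x hx
    apply ENNReal.ofReal_le_ofReal
    have : 0 ≤ x * s ^ (-1 - α) := mul_nonneg (hδ.trans hx.1).le (rpow_nonneg hs.le _)
    linarith
  have hJfin : J ≠ ∞ := ne_top_of_le_ne_top hIfin hJI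
  have hIJ : I ≤ J + ENNReal.ofReal (s ^ (-1 - α)) := by
    have h1 : I ≤ ∫⁻ y in Ioo δ s, (ENNReal.ofReal (y ^ (-α) - y * s ^ (-1 - α)) +
        ENNReal.ofReal (s ^ (-1 - α)) * ENNReal.ofReal y) ∂ν := by
      apply setLIntegral_mono (by fun_prop)
      intro x hx
      rw [← ENNReal.ofReal_mul (rpow_nonneg hs.le _)]
      refine le_trans (ENNReal.ofReal_le_ofReal ?_) ENNReal.ofReal_add_le
      linarith
    refine h1.trans ?_
    rw [lintegral_add_left (by fun_prop), lintegral_const_mul _ (by fun_prop)]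
    refine add_le_add le_rfl ?_
    have : ∫⁻ y in Ioo δ s, ENNReal.ofReal y ∂ν ≤ 1 := by
      rw [← h.mass]; exact setLIntegral_le_lintegral _ _
    calc _ ≤ ENNReal.ofReal (s ^ (-1 - α)) * 1 := mul_le_mul' le_rfl this
      _ = _ := mul_one _
  have hIθ : ENNReal.ofReal θ * J ≤ I := by
    have ht := h.test ((Ioo δ s).indicator fun x => ENNReal.ofReal (x ^ (-α - 2)))
      (Measurable.indicator (by fun_prop) measurableSet_Ioo)
    have hl : ∫⁻ x, ENNReal.ofReal (x ^ 2) * (Ioo δ s).indicator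
        (fun x => ENNReal.ofReal (x ^ (-α - 2))) x ∂ν = I := by
      rw [hI, ← lintegral_indicator measurableSet_Ioo]
      congr 1
      ext x
      by_cases hx : x ∈ Ioo δ s
      · have hx0 : 0 < x := hδ.trans hx.1
        simp only [indicator_of_mem hx]
        rw [← ENNReal.ofReal_mul (by positivity), ← rpow_natCast, ← rpow_add hx0]
        congr 2; push_cast; ring
      · simp [indicator_of_notMem hx]
    rw [← hl, ht]
    have e : ENNReal.ofReal θ * J = ∫⁻ y, ∫⁻ z, (Ioo δ s).indicator
        (fun y => ENNReal.ofReal (2 / (1 + α)) * ENNReal.ofReal (y ^ (-α) - y * s ^ (-1 - α))) y *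
        (Ioi s).indicator 1 z ∂ν ∂ν := by
      have hi : Measurable ((Ioi s).indicator (1 : ℝ → ℝ≥0∞)) :=
        measurable_one.indicator measurableSet_Ioi
      simp_rw [lintegral_const_mul _ hi]
      rw [lintegral_mul_const _ (Measurable.indicator (by fun_prop) measurableSet_Ioo),
        lintegral_indicator_one measurableSet_Ioi, lintegral_indicator measurableSet_Ioo,
        lintegral_const_mul _ (by fun_prop), ← hJ, ← ENNReal.ofReal_toReal hfin, ← hndef,
        mul_right_comm, ← ENNReal.ofReal_mul (by positivity), hθ]
      congr 2; ring
    rw [e]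
    apply dmono h.pos
    intro y z hy hz
    by_cases hy' : y ∈ Ioo δ s
    swap
    · simp [indicator_of_notMem hy']
    by_cases hz' : z ∈ Ioi s
    swap
    · simp [indicator_of_notMem hz']
    have hz2 : s < z := hz'
    simp only [indicator_of_mem hy', indicator_of_mem hz', Pi.one_apply, mul_one]
    rw [lintegral_indicator measurableSet_Ioo, Measure.restrict_restrict measurableSet_Ioo]
    have hset : Ioo y s ⊆ Ioo δ s ∩ Ioo y (y + z) := fun x hx =>
      ⟨⟨hy'.1.trans hx.1, hx.2⟩, hx.1, by have := hx.2; linarith⟩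
    have hge := lintegral_mono_set (μ := volume) (f := fun x => ENNReal.ofReal (x ^ (-α - 2))) hset
    rw [lint_rpow _ _ _ hy hy'.2.le (by linarith)] at hge
    refine le_trans ?_ (mul_le_mul' (mul_le_mul' le_rfl (h.lo y z hy hz)) hge)
    rw [← ENNReal.ofReal_mul (by positivity)]
    have e2 : (2:ℝ≥0∞) = ENNReal.ofReal 2 := by simp
    rw [e2, ← ENNReal.ofReal_mul hy.le, ← ENNReal.ofReal_mul (by positivity)]
    apply ENNReal.ofReal_le_ofReal
    apply le_of_eq
    have e3 : y ^ (-α) = y * y ^ (-1 - α) := by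
      rw [← rpow_one_add' hy.le (by linarith)]; congr 1; ring
    have e4 : -α - 2 + 1 = -1 - α := by ring
    rw [e3, e4]
    have : (1 + α) ≠ 0 := by linarith
    have : (-1 - α) ≠ 0 := by linarith
    field_simp
    ring
  rw [← ENNReal.ofReal_toReal hIfin]
  apply ENNReal.ofReal_le_ofReal
  rw [le_div_iff₀ (by linarith)]
  have r1 : I.toReal ≤ J.toReal + s ^ (-1 - α) := by
    have := ENNReal.toReal_mono (by simp [hJfin]) hIJ
    rwa [ENNReal.toReal_add hJfin (by simp), ENNReal.toReal_ofReal (rpow_nonneg hs.le _)] at this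
  have r2 : θ * J.toReal ≤ I.toReal := by
    have := ENNReal.toReal_mono hIfin hIθ
    rwa [ENNReal.toReal_mul, ENNReal.toReal_ofReal (by linarith)] at this
  nlinarith

theorem GoodMeas.low_moment {ν : Measure ℝ} [SFinite ν] {k : ℝ → ℝ → ℝ≥0∞} {α ε : ℝ}
    (h : GoodMeas ν k α ε) (hα : 0 < α) (hn : ENNReal.ofReal ((1 + α) / 2) < ν univ) :
    ∫⁻ x, ENNReal.ofReal (x ^ (-α)) ∂ν ≠ ∞ := by
  obtain ⟨s, hs, hs'⟩ := h.exists_tail hn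
  have hn' : (1 + α) / 2 < (ν (Ioi s)).toReal :=
    (ENNReal.ofReal_lt_iff_lt_toReal (by positivity) (h.tail_finite hs)).1 hs'
  have h1 : ∫⁻ x in Ioo 0 s, ENNReal.ofReal (x ^ (-α)) ∂ν ≠ ∞ := by
    have hU : Ioo 0 s = ⋃ n : ℕ, Ioo (1 / ((n:ℝ) + 1)) s := by
      ext x
      simp only [mem_Ioo, mem_iUnion]
      constructor
      · rintro ⟨a, b⟩
        obtain ⟨n, hn⟩ := exists_nat_one_div_lt a
        exact ⟨n, hn, b⟩
      · rintro ⟨n, a, b⟩; exact ⟨lt_trans (by positivity) a, b⟩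
    have hd : Directed (fun x1 x2 => x1 ⊆ x2) fun n : ℕ => Ioo (1 / ((n:ℝ) + 1)) s := by
      apply Monotone.directed_le
      intro m n hmn
      apply Ioo_subset_Ioo_left
      apply one_div_le_one_div_of_le (by positivity)
      have : (m:ℝ) ≤ n := by exact_mod_cast hmn
      linarith
    rw [hU, setLIntegral_iUnion_of_directed _ hd]
    refine ne_top_of_le_ne_top ENNReal.ofReal_ne_top 
      (iSup_le fun n => h.low_bound hα hs (by positivity) hn')
  have h2 : ∫⁻ x in Ici s, ENNReal.ofReal (x ^ (-α)) ∂ν ≠ ∞ := by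
    have : ∫⁻ x in Ici s, ENNReal.ofReal (x ^ (-α)) ∂ν ≤
        ∫⁻ x in Ici s, ENNReal.ofReal (s ^ (-α)) ∂ν := by
      apply setLIntegral_mono measurable_const
      intro x hx
      apply ENNReal.ofReal_le_ofReal
      exact rpow_le_rpow_of_nonpos hs hx (by linarith)
    refine ne_top_of_le_ne_top ?_ this
    rw [setLIntegral_const]
    refine ENNReal.mul_ne_top (by simp) (ne_top_of_le_ne_top (ENNReal.one_ne_top) ?_)
    exact (measure_mono (subset_univ _)).trans h.univ_le_one
  have h3 : ∫⁻ x, ENNReal.ofReal (x ^ (-α)) ∂ν =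
      ∫⁻ x in Ioo 0 s ∪ Ici s, ENNReal.ofReal (x ^ (-α)) ∂ν := by
    rw [Ioo_union_Ici_eq_Ioi hs, Measure.restrict_eq_self_of_ae_mem]
    exact h.pos
  rw [h3]
  exact ne_top_of_le_ne_top (ENNReal.add_ne_top.2 ⟨h1, h2⟩) (lintegral_union_le _ _ _)

theorem rpow_le_one_add_rpow {x p q : ℝ} (hx : 0 < x) (hp : 0 ≤ p) (hpq : p ≤ q) :
    x ^ p ≤ 1 + x ^ q := by
  rcases le_total x 1 with h | h
  · have := rpow_le_one hx.le h hp
    have := rpow_nonneg hx.le q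
    linarith
  · have := rpow_le_rpow_of_exponent_le h hpq
    linarith

theorem real_kernel_aux {α ε b γ m M : ℝ} (hα : α ∈ Ioo (0:ℝ) 1) (hε : 0 ≤ ε) (hb : 1 < b)
    (hbγ : b - 1 + α ≤ γ) (hm : 0 < m) (hmM : m ≤ M) :
    (M ^ (b - 1) * m) * (2 + ε * ((m / M) ^ α + (M / m) ^ α)) ≤
      (2 + 2 * ε) * ((1 + M ^ γ) * (1 + m)) := by
  have hM : 0 < M := hm.trans_le hmM
  have h1 : 1 ≤ (M / m) ^ α := one_le_rpow ((one_le_div hm).2 hmM) hα.1.le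
  have h2 : (m / M) ^ α ≤ 1 := rpow_le_one (by positivity) ((div_le_one hM).2 hmM) hα.1.le
  have h3 : 2 + ε * ((m / M) ^ α + (M / m) ^ α) ≤ (2 + 2 * ε) * (M / m) ^ α := by
    nlinarith
  have h4 : (M ^ (b - 1) * m) * (M / m) ^ α = M ^ (b - 1 + α) * m ^ (1 - α) := by
    rw [div_rpow hM.le hm.le, rpow_add hM, rpow_sub hm, rpow_one]
    field_simp
  have h5 : M ^ (b - 1 + α) ≤ 1 + M ^ γ := rpow_le_one_add_rpow hM (by linarith [hα.1]) hbγ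
  have h6 : m ^ (1 - α) ≤ 1 + m := by
    have := rpow_le_one_add_rpow (q := 1) hm (by linarith [hα.2] : 0 ≤ 1 - α) (by linarith [hα.1])
    rwa [rpow_one] at this
  calc (M ^ (b - 1) * m) * (2 + ε * ((m / M) ^ α + (M / m) ^ α))
      ≤ (M ^ (b - 1) * m) * ((2 + 2 * ε) * (M / m) ^ α) := by gcongr
    _ = (2 + 2 * ε) * (M ^ (b - 1 + α) * m ^ (1 - α)) := by rw [← h4]; ring
    _ ≤ _ := by gcongr

theorem up_inner {b y z : ℝ} (hb : 1 < b) (hb2 : b ≤ 2) (hy : 0 < y) (hz : 0 < z) :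
    ENNReal.ofReal y * ∫⁻ x in Ioo y (y + z), ENNReal.ofReal (x ^ (b - 2)) ≤
      ENNReal.ofReal (2 / (b - 1) * (max y z ^ (b - 1) * min y z)) := by
  have hb1 : 0 < b - 1 := by linarith
  rcases le_or_gt z y with h | h
  · have h1 : ∫⁻ x in Ioo y (y + z), ENNReal.ofReal (x ^ (b - 2)) ≤
        ENNReal.ofReal (y ^ (b - 2)) * ENNReal.ofReal z := by
      calc _ ≤ ∫⁻ x in Ioo y (y + z), ENNReal.ofReal (y ^ (b - 2)) := by
            apply setLIntegral_mono measurable_const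
            intro x hx
            apply ENNReal.ofReal_le_ofReal
            exact rpow_le_rpow_of_nonpos hy hx.1.le (by linarith)
        _ = _ := by rw [setLIntegral_const, Real.volume_Ioo]; congr 2; ring
    refine (mul_le_mul' le_rfl h1).trans ?_
    rw [← ENNReal.ofReal_mul (rpow_nonneg hy.le _), ← ENNReal.ofReal_mul hy.le]
    apply ENNReal.ofReal_le_ofReal
    rw [max_eq_left h, min_eq_right h]
    have e : y * (y ^ (b - 2) * z) = y ^ (b - 1) * z := by
      have : b - 1 = 1 + (b - 2) := by ring
      rw [this, rpow_one_add' hy.le (by linarith)]; ring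
    rw [e]
    have : 1 ≤ 2 / (b - 1) := by rw [one_le_div hb1]; linarith
    have hnn : 0 ≤ y ^ (b - 1) * z := mul_nonneg (rpow_nonneg hy.le _) hz.le
    nlinarith
  · rw [lint_rpow _ _ _ hy (by linarith) (by linarith), ← ENNReal.ofReal_mul hy.le]
    apply ENNReal.ofReal_le_ofReal
    rw [max_eq_right h.le, min_eq_left h.le]
    have e : b - 2 + 1 = b - 1 := by ring
    rw [e]
    have h1 : (y + z) ^ (b - 1) ≤ 2 * z ^ (b - 1) := by
      calc (y + z) ^ (b - 1) ≤ (2 * z) ^ (b - 1) :=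
            rpow_le_rpow (by linarith) (by linarith) hb1.le
        _ = 2 ^ (b - 1) * z ^ (b - 1) := mul_rpow (by norm_num) hz.le
        _ ≤ 2 * z ^ (b - 1) := by
          have : (2:ℝ) ^ (b - 1) ≤ 2 ^ (1:ℝ) :=
            rpow_le_rpow_of_exponent_le (by norm_num) (by linarith)
          rw [rpow_one] at this
          have := rpow_nonneg hz.le (b - 1)
          gcongr
    have h2 := rpow_nonneg hy.le (b - 1)
    calc y * (((y + z) ^ (b - 1) - y ^ (b - 1)) / (b - 1)) ≤ y * ((2 * z ^ (b - 1)) / (b - 1)) := by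
          gcongr; linarith
      _ = _ := by ring

theorem GoodMeas.up_step {ν : Measure ℝ} [SFinite ν] {k : ℝ → ℝ → ℝ≥0∞} {α ε b γ : ℝ}
    (h : GoodMeas ν k α ε) (hα : α ∈ Ioo (0:ℝ) 1) (hε : 0 ≤ ε) (hb : 1 < b) (hb2 : b ≤ 2)
    (hbγ : b - 1 + α ≤ γ) (hγ : ∫⁻ x, ENNReal.ofReal (x ^ γ) ∂ν ≠ ∞) :
    ∫⁻ x, ENNReal.ofReal (x ^ b) ∂ν ≠ ∞ := by
  have hu : ν univ ≠ ∞ := ne_top_of_le_ne_top ENNReal.one_ne_top h.univ_le_one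
  have ht := h.test (fun x => ENNReal.ofReal (x ^ (b - 2))) (by fun_prop)
  have hl : ∫⁻ x, ENNReal.ofReal (x ^ 2) * ENNReal.ofReal (x ^ (b - 2)) ∂ν =
      ∫⁻ x, ENNReal.ofReal (x ^ b) ∂ν := by
    apply lintegral_congr_ae
    filter_upwards [h.pos] with x hx
    rw [← ENNReal.ofReal_mul (by positivity), ← rpow_natCast, ← rpow_add hx]
    congr 2; push_cast; ring
  rw [← hl, ht]
  set C := 2 / (b - 1) * (2 + 2 * ε) with hC
  have hb1 : 0 < b - 1 := by linarith
  have hCnn : 0 ≤ C := by positivity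
  have hle : ∫⁻ y, ∫⁻ z, ENNReal.ofReal y * k y z *
      (∫⁻ x in Ioo y (y + z), ENNReal.ofReal (x ^ (b - 2))) ∂ν ∂ν ≤
      ∫⁻ y, ∫⁻ z, ENNReal.ofReal C * (ENNReal.ofReal (1 + y ^ γ) * ENNReal.ofReal (1 + z) +
        ENNReal.ofReal (1 + y) * ENNReal.ofReal (1 + z ^ γ)) ∂ν ∂ν := by
    apply dmono h.pos
    intro y z hy hz
    have hyγ := rpow_nonneg hy.le γ
    have hzγ := rpow_nonneg hz.le γ
    rw [mul_right_comm]
    refine (mul_le_mul' (up_inner hb hb2 hy hz) (h.hi y z hy hz)).trans ?_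
    have hmax : 0 < max y z := lt_max_of_lt_left hy
    have hmin : 0 < min y z := lt_min hy hz
    have hr := rpow_nonneg hmax.le (b - 1)
    rw [← ENNReal.ofReal_mul (by positivity), ← ENNReal.ofReal_mul (by positivity),
      ← ENNReal.ofReal_mul (by positivity), ← ENNReal.ofReal_add (by positivity) (by positivity),
      ← ENNReal.ofReal_mul hCnn]
    apply ENNReal.ofReal_le_ofReal
    have key : (max y z ^ (b - 1) * min y z) * (2 + ε * ((y / z) ^ α + (z / y) ^ α)) ≤
        (2 + 2 * ε) * ((1 + y ^ γ) * (1 + z) + (1 + y) * (1 + z ^ γ)) := by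
      have p1 : 0 ≤ (1 + y ^ γ) * (1 + z) := by positivity
      have p2 : 0 ≤ (1 + y) * (1 + z ^ γ) := by positivity
      rcases le_total z y with hzy | hzy
      · rw [max_eq_left hzy, min_eq_right hzy]
        have := real_kernel_aux hα hε hb hbγ hz hzy
        rw [add_comm ((z / y) ^ α)] at this
        refine this.trans ?_
        gcongr
        linarith
      · rw [max_eq_right hzy, min_eq_left hzy]
        have := real_kernel_aux hα hε hb hbγ hy hzy
        refine this.trans ?_
        gcongr
        linarith
    calc _ = 2 / (b - 1) * ((max y z ^ (b - 1) * min y z) *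
          (2 + ε * ((y / z) ^ α + (z / y) ^ α))) := by ring
      _ ≤ 2 / (b - 1) * ((2 + 2 * ε) * ((1 + y ^ γ) * (1 + z) + (1 + y) * (1 + z ^ γ))) := by
        gcongr
      _ = _ := by rw [hC]; ring
  refine ne_top_of_le_ne_top ?_ hle
  have f1 : ∫⁻ x, ENNReal.ofReal (1 + x) ∂ν ≠ ∞ := by
    refine ne_top_of_le_ne_top ?_ (lintegral_mono fun x => ENNReal.ofReal_add_le)
    rw [lintegral_add_left measurable_const, h.mass]
    simp [hu]
  have f2 : ∫⁻ x, ENNReal.ofReal (1 + x ^ γ) ∂ν ≠ ∞ := by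
    refine ne_top_of_le_ne_top ?_ (lintegral_mono fun x => ENNReal.ofReal_add_le)
    rw [lintegral_add_left measurable_const]
    simp [hu, hγ]
  have m1 : Measurable fun x : ℝ => ENNReal.ofReal (1 + x) := by fun_prop
  have m2 : Measurable fun x : ℝ => ENNReal.ofReal (1 + x ^ γ) := by fun_prop
  simp_rw [lintegral_const_mul' _ _ ENNReal.ofReal_ne_top]
  refine ENNReal.mul_ne_top ENNReal.ofReal_ne_top ?_
  have e : ∀ y : ℝ, ∫⁻ z, (ENNReal.ofReal (1 + y ^ γ) * ENNReal.ofReal (1 + z) +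
        ENNReal.ofReal (1 + y) * ENNReal.ofReal (1 + z ^ γ)) ∂ν =
      ENNReal.ofReal (1 + y ^ γ) * ∫⁻ z, ENNReal.ofReal (1 + z) ∂ν +
        ENNReal.ofReal (1 + y) * ∫⁻ z, ENNReal.ofReal (1 + z ^ γ) ∂ν := by
    intro y
    rw [lintegral_add_left (by fun_prop), lintegral_const_mul _ m1, lintegral_const_mul _ m2]
  simp_rw [e]
  rw [lintegral_add_left (by fun_prop), lintegral_mul_const _ m2, lintegral_mul_const _ m1]
  exact ENNReal.add_ne_top.2 ⟨ENNReal.mul_ne_top f2 f1, ENNReal.mul_ne_top f1 f2⟩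

theorem GoodMeas.up_moment {ν : Measure ℝ} [SFinite ν] {k : ℝ → ℝ → ℝ≥0∞} {α ε : ℝ}
    (h : GoodMeas ν k α ε) (hα : α ∈ Ioo (0:ℝ) 1) (hε : 0 ≤ ε) (n : ℕ) :
    ∀ b : ℝ, 1 ≤ b → b ≤ 2 → b ≤ 1 + n * (1 - α) → ∫⁻ x, ENNReal.ofReal (x ^ b) ∂ν ≠ ∞ := by
  have h1 : ∫⁻ x, ENNReal.ofReal (x ^ (1:ℝ)) ∂ν ≠ ∞ := by
    simp only [rpow_one]; rw [h.mass]; exact ENNReal.one_ne_top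
  induction n with
  | zero =>
    intro b hb1 _ hb
    have : b = 1 := by push_cast at hb; linarith
    rw [this]; exact h1
  | succ n ih =>
    intro b hb1 hb2 hb
    rcases hb1.eq_or_lt with rfl | hb1
    · exact h1
    have hα1 := hα.2
    push_cast at hb
    refine h.up_step hα hε hb1 hb2 (γ := max 1 (b - 1 + α)) (le_max_right _ _) ?_
    refine ih _ (le_max_left _ _) (max_le (by norm_num) (by linarith)) (max_le ?_ (by linarith))
    have : (0:ℝ) ≤ n * (1 - α) := mul_nonneg (Nat.cast_nonneg n) (by linarith)
    linarith

theorem GoodMeas.up_moment' {ν : Measure ℝ} [SFinite ν] {k : ℝ → ℝ → ℝ≥0∞} {α ε : ℝ}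
    (h : GoodMeas ν k α ε) (hα : α ∈ Ioo (0:ℝ) 1) (hε : 0 ≤ ε) {b : ℝ} (hb : 1 ≤ b)
    (hb2 : b ≤ 2) : ∫⁻ x, ENNReal.ofReal (x ^ b) ∂ν ≠ ∞ := by
  obtain ⟨n, hn⟩ := exists_nat_ge (1 / (1 - α))
  have hα1 : 0 < 1 - α := by linarith [hα.2]
  rw [div_le_iff₀ hα1] at hn
  exact h.up_moment hα hε n b hb hb2 (by linarith)

theorem div_max_eq {y s : ℝ} (hy : 0 < y) (hs : 0 < s) : y / max y s = min 1 (y / s) := by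
  rcases le_total y s with h | h
  · rw [max_eq_right h, min_eq_right ((div_le_one hs).2 h)]
  · rw [max_eq_left h, min_eq_left ((one_le_div hs).2 h), div_self hy.ne']

theorem D_le {y z s : ℝ} (hy : 0 < y) (hz : 0 < z) (hs : 0 < s) :
    (y / max y s - y / max (y + z) s) + (z / max z s - z / max (y + z) s) ≤
      min 1 (y / s) * min 1 (z / s) := by
  have e : (y / max y s - y / max (y + z) s) + (z / max z s - z / max (y + z) s) =
      min 1 (y / s) + min 1 (z / s) - min 1 (y / s + z / s) := by
    rw [← add_div, ← div_max_eq hy hs, ← div_max_eq hz hs, ← div_max_eq (add_pos hy hz) hs]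
    ring
  rw [e]
  have ha : 0 < y / s := by positivity
  have hb : 0 < z / s := by positivity
  generalize y / s = a at *
  generalize z / s = b at *
  rcases le_total 1 a with h1 | h1
  · rw [min_eq_left h1, min_eq_left (by linarith : (1:ℝ) ≤ a + b)]; linarith
  rcases le_total 1 b with h2 | h2
  · rw [min_eq_left h2, min_eq_left (by linarith : (1:ℝ) ≤ a + b)]; linarith
  rw [min_eq_right h1, min_eq_right h2]
  rcases le_total 1 (a + b) with h3 | h3
  · rw [min_eq_left h3]; nlinarith
  · rw [min_eq_right h3]; nlinarith

theorem A_le {α y s : ℝ} (hα : α ∈ Ioo (0:ℝ) 1) (hy : 0 < y) (hs : 0 < s) :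
    y ^ α * min 1 (y / s) ≤ s ^ (α - 1) * y := by
  have h0 : 0 < y / s := by positivity
  have hp : 0 < min 1 (y / s) := lt_min one_pos h0
  have h1 : min 1 (y / s) ≤ (y / s) ^ (1 - α) := by
    rcases le_total 1 (y / s) with h | h
    · rw [min_eq_left h]; exact one_le_rpow h (by linarith [hα.2])
    · rw [min_eq_right h]
      have := rpow_le_rpow_of_exponent_ge h0 h (by linarith [hα.1] : 1 - α ≤ 1)
      rwa [rpow_one] at this
  calc y ^ α * min 1 (y / s) ≤ y ^ α * (y / s) ^ (1 - α) := by
        have := rpow_nonneg hy.le α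
        gcongr
    _ = s ^ (α - 1) * y := by
      rw [div_rpow hy.le hs.le, rpow_sub hy, rpow_one, (by ring : α - 1 = -(1 - α)), rpow_neg hs.le]
      have : y ^ α ≠ 0 := (rpow_pos_of_pos hy _).ne'
      field_simp

theorem B_le {α z s : ℝ} (hα : α ∈ Ioo (0:ℝ) 1) (hz : 0 < z) (hs : 0 < s) :
    (z ^ α)⁻¹ * min 1 (z / s) ≤ s⁻¹ * (1 + z) := by
  have h6 : z ^ (1 - α) ≤ 1 + z := by
    have := rpow_le_one_add_rpow (q := 1) hz (by linarith [hα.2] : 0 ≤ 1 - α) (by linarith [hα.1])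
    rwa [rpow_one] at this
  have hzp := rpow_pos_of_pos hz α
  calc (z ^ α)⁻¹ * min 1 (z / s) ≤ (z ^ α)⁻¹ * (z / s) := by gcongr; exact min_le_right _ _
    _ = s⁻¹ * z ^ (1 - α) := by rw [rpow_sub hz, rpow_one]; field_simp
    _ ≤ _ := by gcongr

theorem GoodMeas.ode_ineq {ν : Measure ℝ} [SFinite ν] {k : ℝ → ℝ → ℝ≥0∞} {α ε s : ℝ}
    (h : GoodMeas ν k α ε) (hα : α ∈ Ioo (0:ℝ) 1) (hε : 0 ≤ ε) (hs : 0 < s) :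
    ν (Ioi s) ≤ (∫⁻ y, ENNReal.ofReal (min 1 (y / s)) ∂ν) *
      (∫⁻ y, ENNReal.ofReal (min 1 (y / s)) ∂ν) + ENNReal.ofReal (2 * ε * s ^ (α - 2)) := by
  set P := ∫⁻ y, ENNReal.ofReal (min 1 (y / s)) ∂ν with hP
  set p : ℝ → ℝ≥0∞ := fun y => ENNReal.ofReal (min 1 (y / s)) with hp
  set A : ℝ → ℝ≥0∞ := fun y => ENNReal.ofReal (s ^ (α - 1) * y) with hA
  set B : ℝ → ℝ≥0∞ := fun y => ENNReal.ofReal (s⁻¹ * (1 + y)) with hB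
  have mp : Measurable p := by fun_prop
  have mA : Measurable A := by fun_prop
  have mB : Measurable B := by fun_prop
  have hle : 2 * ν (Ioi s) ≤ ∫⁻ y, ∫⁻ z, (2 * p y * p z +
      (ENNReal.ofReal ε * A y * B z + ENNReal.ofReal ε * B y * A z)) ∂ν ∂ν := by
    rw [h.test_tail_symm hs]
    apply dmono h.pos
    intro y z hy hz
    have n1 : 0 ≤ y / max y s - y / max (y + z) s := by
      have : 0 < max y s := lt_max_of_lt_left hy
      rw [sub_nonneg]
      gcongr
      linarith
    have n2 : 0 ≤ z / max z s - z / max (y + z) s := by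
      have : 0 < max z s := lt_max_of_lt_left hz
      rw [sub_nonneg]
      gcongr
      linarith
    have hpy : 0 < min 1 (y / s) := lt_min one_pos (by positivity)
    have hpz : 0 < min 1 (z / s) := lt_min one_pos (by positivity)
    have hsα := rpow_pos_of_pos hs (α - 1)
    rw [← ENNReal.ofReal_add n1 n2]
    refine (mul_le_mul' (h.hi y z hy hz) (ENNReal.ofReal_le_ofReal (D_le hy hz hs))).trans ?_
    have e2 : (2:ℝ≥0∞) = ENNReal.ofReal 2 := by simp
    rw [hp, hA, hB, e2]
    simp only
    rw [← ENNReal.ofReal_mul (by positivity), ← ENNReal.ofReal_mul (by positivity),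
      ← ENNReal.ofReal_mul (by positivity), ← ENNReal.ofReal_mul (by positivity),
      ← ENNReal.ofReal_mul (by positivity), ← ENNReal.ofReal_mul (by positivity),
      ← ENNReal.ofReal_mul (by positivity), ← ENNReal.ofReal_add (by positivity) (by positivity),
      ← ENNReal.ofReal_add (by positivity) (by positivity)]
    apply ENNReal.ofReal_le_ofReal
    have hyp := rpow_pos_of_pos hy α
    have hzp := rpow_pos_of_pos hz α
    have k1 : (y ^ α * min 1 (y / s)) * ((z ^ α)⁻¹ * min 1 (z / s)) ≤
        (s ^ (α - 1) * y) * (s⁻¹ * (1 + z)) :=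
      mul_le_mul (A_le hα hy hs) (B_le hα hz hs) (by positivity) (by positivity)
    have k2 : ((y ^ α)⁻¹ * min 1 (y / s)) * (z ^ α * min 1 (z / s)) ≤
        (s⁻¹ * (1 + y)) * (s ^ (α - 1) * z) :=
      mul_le_mul (B_le hα hy hs) (A_le hα hz hs) (by positivity) (by positivity)
    rw [div_rpow hy.le hz.le, div_rpow hz.le hy.le]
    calc _ = 2 * min 1 (y / s) * min 1 (z / s) + (ε * ((y ^ α * min 1 (y / s)) *
          ((z ^ α)⁻¹ * min 1 (z / s))) + ε * (((y ^ α)⁻¹ * min 1 (y / s)) *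
          (z ^ α * min 1 (z / s)))) := by ring
      _ ≤ 2 * min 1 (y / s) * min 1 (z / s) + (ε * ((s ^ (α - 1) * y) * (s⁻¹ * (1 + z))) +
          ε * ((s⁻¹ * (1 + y)) * (s ^ (α - 1) * z))) := by gcongr
      _ = _ := by ring
  have e : ∀ y : ℝ, ∫⁻ z, (2 * p y * p z +
      (ENNReal.ofReal ε * A y * B z + ENNReal.ofReal ε * B y * A z)) ∂ν =
      2 * P * p y + ((ENNReal.ofReal ε * ∫⁻ z, B z ∂ν) * A y +
        (ENNReal.ofReal ε * ∫⁻ z, A z ∂ν) * B y) := by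
    intro y
    rw [lintegral_add_left (by fun_prop), lintegral_add_left (by fun_prop),
      lintegral_const_mul _ mp, lintegral_const_mul _ mA, lintegral_const_mul _ mB]
    ring
  simp_rw [e] at hle
  rw [lintegral_add_left (by fun_prop), lintegral_add_left (by fun_prop),
      lintegral_const_mul _ mp, lintegral_const_mul _ mA, lintegral_const_mul _ mB] at hle
  have hsα := rpow_pos_of_pos hs (α - 1)
  have iA : ∫⁻ z, A z ∂ν ≤ ENNReal.ofReal (s ^ (α - 1)) := by
    rw [hA]
    simp_rw [ENNReal.ofReal_mul hsα.le]
    rw [lintegral_const_mul _ (by fun_prop), h.mass, mul_one]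
  have iB : ∫⁻ z, B z ∂ν ≤ ENNReal.ofReal (2 * s⁻¹) := by
    rw [hB]
    simp_rw [ENNReal.ofReal_mul (inv_pos.2 hs).le]
    rw [lintegral_const_mul _ (by fun_prop), mul_comm 2, ENNReal.ofReal_mul (inv_pos.2 hs).le]
    refine mul_le_mul' le_rfl ?_
    refine (lintegral_mono fun x => ENNReal.ofReal_add_le).trans ?_
    rw [lintegral_add_left measurable_const, h.mass]
    simp only [ENNReal.ofReal_one, lintegral_const, one_mul]
    have : ENNReal.ofReal 2 = 1 + 1 := by rw [one_add_one_eq_two]; simp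
    rw [this]
    gcongr
    exact h.univ_le_one
  have hfin : (ENNReal.ofReal ε * ∫⁻ z, B z ∂ν) * ∫⁻ z, A z ∂ν +
      (ENNReal.ofReal ε * ∫⁻ z, A z ∂ν) * ∫⁻ z, B z ∂ν ≤
      2 * ENNReal.ofReal (2 * ε * s ^ (α - 2)) := by
    have e3 : ENNReal.ofReal (2 * ε * s ^ (α - 2)) =
        ENNReal.ofReal ε * ENNReal.ofReal (2 * s⁻¹) * ENNReal.ofReal (s ^ (α - 1)) := by
      rw [← ENNReal.ofReal_mul hε, ← ENNReal.ofReal_mul (by positivity)]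
      congr 1
      have : α - 2 = (α - 1) + (-1) := by ring
      rw [this, rpow_add hs, rpow_neg_one]; ring
    rw [two_mul]
    refine add_le_add ?_ ?_
    · rw [e3]; gcongr
    · rw [e3, mul_right_comm]; gcongr
  have h5 : 2 * ν (Ioi s) ≤ 2 * (P * P + ENNReal.ofReal (2 * ε * s ^ (α - 2))) := by
    refine hle.trans ?_
    rw [mul_add, ← mul_assoc]
    exact add_le_add le_rfl hfin
  exact (ENNReal.mul_le_mul_iff_right (by simp) (by simp)).1 h5

theorem GoodMeas.integrable_id {ν : Measure ℝ} {k : ℝ → ℝ → ℝ≥0∞} {α ε : ℝ}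
    (h : GoodMeas ν k α ε) : Integrable (fun x : ℝ => x) ν := by
  refine ⟨by fun_prop, ?_⟩
  rw [hasFiniteIntegral_iff_norm]
  have : ∫⁻ a, ENNReal.ofReal ‖a‖ ∂ν = ∫⁻ x, ENNReal.ofReal x ∂ν := by
    apply lintegral_congr_ae
    filter_upwards [h.pos] with x hx
    rw [Real.norm_of_nonneg hx.le]
  rw [this, h.mass]; exact ENNReal.one_lt_top

theorem GoodMeas.N_deriv {ν : Measure ℝ} [IsFiniteMeasure ν] {k : ℝ → ℝ → ℝ≥0∞} {α ε : ℝ}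
    (h : GoodMeas ν k α ε) {x : ℝ} :
    HasDerivAt (fun x => ∫ y, min x y ∂ν) (ν.real (Ioi x)) x := by
  have := hasDerivAt_integral_of_dominated_loc_of_lip (μ := ν) (bound := fun _ => 1)
    (F := fun x y => min x y) (x₀ := x) (s := univ) (F' := (Ioi x).indicator 1) univ_mem
    (Eventually.of_forall fun x => by fun_prop) ?_ ?_ ?_ (integrable_const _) ?_
  · have h2 := this.2
    rwa [integral_indicator_one measurableSet_Ioi] at h2
  · exact (integrable_const x).inf h.integrable_id
  · exact (measurable_one.indicator measurableSet_Ioi).aestronglyMeasurable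
  · refine Eventually.of_forall fun y => ?_
    simp only [map_one]
    apply LipschitzOnWith.of_dist_le_mul
    intro a _ b _
    simp only [NNReal.coe_one, one_mul, Real.dist_eq]
    have := abs_min_sub_min_le_max a y b y
    simpa using this
  · have hne : ∀ᵐ y ∂ν, y ≠ x := by
      rw [ae_iff]; simpa using h.noatom x
    filter_upwards [hne] with y hy
    rcases lt_or_gt_of_ne hy with hlt | hlt
    · rw [indicator_of_notMem (by simpa using hlt.le)]
      apply (hasDerivAt_const x y).congr_of_eventuallyEq
      filter_upwards [lt_mem_nhds hlt] with t ht
      exact min_eq_right ht.le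
    · rw [indicator_of_mem (by simpa using hlt)]
      apply (hasDerivAt_id x).congr_of_eventuallyEq
      filter_upwards [gt_mem_nhds hlt] with t ht
      exact min_eq_left ht.le

theorem GoodMeas.N_lim {ν : Measure ℝ} [IsFiniteMeasure ν] {k : ℝ → ℝ → ℝ≥0∞} {α ε : ℝ}
    (h : GoodMeas ν k α ε) :
    Tendsto (fun x => ∫ y, min x y ∂ν) atTop (nhds 1) := by
  have h1 : ∫ y, y ∂ν = 1 := by
    rw [integral_eq_lintegral_of_nonneg_ae _ (by fun_prop), h.mass]; · simp
    filter_upwards [h.pos] with x hx using hx.le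
  rw [← h1]
  apply tendsto_integral_filter_of_dominated_convergence (fun y => y)
  · exact Eventually.of_forall fun x => by fun_prop
  · filter_upwards [eventually_ge_atTop 0] with x hx
    filter_upwards [h.pos] with y hy
    rw [Real.norm_of_nonneg (le_min hx hy.le)]
    exact min_le_right _ _
  · exact h.integrable_id
  · refine Eventually.of_forall fun y => ?_
    apply tendsto_const_nhds.congr'
    filter_upwards [eventually_ge_atTop y] with x hx
    rw [min_eq_right hx]

theorem GoodMeas.N_lower {ν : Measure ℝ} [IsFiniteMeasure ν] {k : ℝ → ℝ → ℝ≥0∞} {α ε : ℝ}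
    (h : GoodMeas ν k α ε) (hα : α ∈ Ioo (0:ℝ) 1) (hε : 0 ≤ ε) {x : ℝ} (hx : 0 < x) :
    x / (1 + x) ≤ ∫ y, min x y ∂ν + 2 * ε / (1 - α) * x ^ (α - 1) := by
  set N : ℝ → ℝ := fun x => ∫ y, min x y ∂ν with hN
  have hα1 : 0 < 1 - α := by linarith [hα.2]
  set c := 2 * ε / (1 - α) with hc
  have hc0 : 0 ≤ c := by positivity
  set V : ℝ → ℝ := fun x => N x + c * x ^ (α - 1) with hV
  have hNpos : ∀ x, 0 < x → 0 < N x := by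
    intro x hx
    have hi : Integrable (fun y => min x y) ν := (integrable_const x).inf h.integrable_id
    have hnn : 0 ≤ᵐ[ν] fun y => min x y := by
      filter_upwards [h.pos] with y hy using le_min hx.le hy.le
    rw [hN]
    simp only
    rw [integral_pos_iff_support_of_nonneg_ae hnn hi]
    have h0 : ν (Function.support fun y => min x y) = ν univ := by
      apply measure_congr
      filter_upwards [h.pos] with y hy
      apply propext
      exact ⟨fun _ => trivial, fun _ => (lt_min hx hy).ne'⟩
    rw [h0]
    by_contra hz
    have hz : ν = 0 := by simpa using hz
    have := h.mass
    rw [hz] at this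
    simp at this
  have hode : ∀ x, 0 < x → ν.real (Ioi x) ≤ (N x / x) ^ 2 + 2 * ε * x ^ (α - 2) := by
    intro x hx
    have h1 := h.ode_ineq hα hε hx
    have h2 : ∫⁻ y, ENNReal.ofReal (min 1 (y / x)) ∂ν = ENNReal.ofReal (N x / x) := by
      have e1 : N x / x = ∫ y, min 1 (y / x) ∂ν := by
        rw [hN, ← integral_div]
        congr 1
        ext y
        rw [← min_div_div_right hx.le, div_self hx.ne']
      rw [e1, ofReal_integral_eq_lintegral_ofReal]
      · exact (integrable_const 1).inf (h.integrable_id.div_const x)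
      · filter_upwards [h.pos] with y hy
        exact le_min zero_le_one (by positivity)
    have hp := hNpos x hx
    have hxp := rpow_pos_of_pos hx (α - 2)
    rw [h2, ← ENNReal.ofReal_mul (by positivity), ← ENNReal.ofReal_add (by positivity) (by positivity)] at h1
    have := ENNReal.toReal_mono ENNReal.ofReal_ne_top h1
    rw [ENNReal.toReal_ofReal (by positivity)] at this
    rw [sq]; exact this
  have hVpos : ∀ x, 0 < x → 0 < V x := fun x hx =>
    add_pos_of_pos_of_nonneg (hNpos x hx) (mul_nonneg hc0 (rpow_nonneg hx.le _))
  have hVd : ∀ x, 0 < x → HasDerivAt V (ν.real (Ioi x) + c * ((α - 1) * x ^ (α - 1 - 1))) x :=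
    fun x hx => h.N_deriv.add ((Real.hasDerivAt_rpow_const (Or.inl hx.ne')).const_mul c)
  set G : ℝ → ℝ := fun x => (V x)⁻¹ - x⁻¹ with hG
  have hGd : ∀ x, 0 < x → HasDerivAt G
      (-(ν.real (Ioi x) + c * ((α - 1) * x ^ (α - 1 - 1))) / V x ^ 2 - -(x ^ 2)⁻¹) x :=
    fun x hx => ((hVd x hx).inv (hVpos x hx).ne').sub (hasDerivAt_inv hx.ne')
  have hmono : MonotoneOn G (Ioi 0) := by
    apply monotoneOn_of_deriv_nonneg (convex_Ioi 0)
    · intro x hx; exact (hGd x hx).continuousAt.continuousWithinAt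
    · intro x hx
      rw [interior_Ioi] at hx
      exact (hGd x hx).differentiableAt.differentiableWithinAt
    · intro x hx
      rw [interior_Ioi] at hx
      have hx : 0 < x := hx
      rw [(hGd x hx).deriv]
      have hv := hVpos x hx
      have h1 : ν.real (Ioi x) + c * ((α - 1) * x ^ (α - 1 - 1)) ≤ V x ^ 2 * (x ^ 2)⁻¹ := by
        have e1 : α - 1 - 1 = α - 2 := by ring
        have e2 : c * ((α - 1) * x ^ (α - 1 - 1)) = - (2 * ε * x ^ (α - 2)) := by
          rw [hc, e1]; field_simp; ring
        rw [e2]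
        have h3 := hode x hx
        have h4 : (N x / x) ^ 2 ≤ V x ^ 2 * (x ^ 2)⁻¹ := by
          rw [div_pow, div_eq_mul_inv]
          have : N x ≤ V x := le_add_of_nonneg_right (mul_nonneg hc0 (rpow_nonneg hx.le _))
          have := (hNpos x hx).le
          gcongr
        linarith
      have h2 : (ν.real (Ioi x) + c * ((α - 1) * x ^ (α - 1 - 1))) / V x ^ 2 ≤ (x ^ 2)⁻¹ := by
        rw [div_le_iff₀ (by positivity)]; linarith
      rw [neg_div]; linarith
  have hlim : Tendsto G atTop (nhds 1) := by
    have l1 : Tendsto V atTop (nhds (1 + c * 0)) := by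
      apply h.N_lim.add
      apply Tendsto.const_mul
      have := tendsto_rpow_neg_atTop hα1
      simpa using this
    have l2 : Tendsto G atTop (nhds ((1 + c * 0)⁻¹ - 0)) :=
      (l1.inv₀ (by norm_num)).sub tendsto_inv_atTop_zero
    simpa using l2
  have hG1 : G x ≤ 1 := by
    apply ge_of_tendsto hlim
    filter_upwards [eventually_ge_atTop x] with t ht
    exact hmono hx (hx.trans_le ht) ht
  have hv := hVpos x hx
  change x / (1 + x) ≤ V x
  have h3 : (V x)⁻¹ ≤ 1 + x⁻¹ := by simp only [hG] at hG1; linarith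
  rw [inv_le_comm₀ hv (by positivity)] at h3
  refine le_trans (le_of_eq ?_) h3
  field_simp
  ring

theorem GoodMeas.finite_moments {ν : Measure ℝ} [SFinite ν] {k : ℝ → ℝ → ℝ≥0∞} {α ε b : ℝ}
    (h : GoodMeas ν k α ε) (hα : α ∈ Ioo (0:ℝ) 1) (hε : 0 ≤ ε)
    (hε' : ε ≤ (1 - α) ^ 2 / 16 * ((1 - α) / 4) ^ (2 - α)) (hb : 1 ≤ b) (hb2 : b ≤ 2) :
    ∫⁻ x, ENNReal.ofReal (x ^ (-α)) ∂ν ≠ ∞ ∧ ∫⁻ x, ENNReal.ofReal (x ^ b) ∂ν ≠ ∞ := by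
  refine ⟨?_, h.up_moment' hα hε hb hb2⟩
  have : IsFiniteMeasure ν := ⟨h.univ_le_one.trans_lt ENNReal.one_lt_top⟩
  have hα1 : 0 < 1 - α := by linarith [hα.2]
  apply h.low_moment hα.1
  rw [ENNReal.ofReal_lt_iff_lt_toReal (by linarith [hα.1]) (measure_ne_top _ _)]
  set x := (1 - α) / 4 with hx
  have hx0 : 0 < x := by positivity
  have h1 := h.N_lower hα hε hx0
  have h2 : ∫ y, min x y ∂ν ≤ x * (ν univ).toReal := by
    have : ∫ y, min x y ∂ν ≤ ∫ y, x ∂ν := by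
      apply integral_mono ((integrable_const x).inf h.integrable_id) (integrable_const x)
      intro y; exact min_le_left _ _
    rw [integral_const, smul_eq_mul] at this
    rw [mul_comm]; exact this
  have h3 : 2 * ε / (1 - α) * x ^ (α - 1) ≤ x * ((1 - α) / 8) := by
    have e : x * ((1 - α) / 8) =
        2 * ((1 - α) ^ 2 / 16 * x ^ (2 - α)) / (1 - α) * x ^ (α - 1) := by
      have : x ^ (2 - α) * x ^ (α - 1) = x := by
        rw [← rpow_add hx0]; norm_num
      calc _ = (1 - α) / 8 * (x ^ (2 - α) * x ^ (α - 1)) := by rw [this]; ring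
        _ = _ := by field_simp; ring
    rw [e]
    have := rpow_pos_of_pos hx0 (α - 1)
    gcongr
  have h4 : x * (1 - x) ≤ x / (1 + x) := by
    rw [le_div_iff₀ (by linarith)]
    nlinarith [mul_pos hx0 (mul_pos hx0 hx0)]
  have h5 : x * (1 - x) ≤ x * ((ν univ).toReal + (1 - α) / 8) := by
    rw [mul_add]; linarith
  have h6 := le_of_mul_le_mul_left h5 hx0
  linarith

/-- The kernel with values in `ℝ≥0∞`, cut off to the positive quadrant. -/
noncomputable def kk (ε : ℝ) (W : ℝ → ℝ → ℝ) (y z : ℝ) : ℝ≥0∞ :=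
  ENNReal.ofReal ((Ioi (0:ℝ) ×ˢ Ioi (0:ℝ)).indicator (fun p : ℝ × ℝ => Kern ε W p.1 p.2) (y, z))

/-- The measure with density `φ`. -/
noncomputable def nu (φ : ℝ → ℝ) : Measure ℝ :=
  (volume.restrict (Ioi (0:ℝ))).withDensity (fun x => ENNReal.ofReal (φ x))

instance nu_sfinite (φ : ℝ → ℝ) : SFinite (nu φ) := by unfold nu; infer_instance

/-- Integrand of the double integral in the profile equation. -/
noncomputable def TT (ε : ℝ) (W : ℝ → ℝ → ℝ) (x y z : ℝ) : ℝ≥0∞ :=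
  {p : ℝ × ℝ × ℝ | p.2.1 < p.1 ∧ p.1 < p.2.1 + p.2.2}.indicator
    (fun p => ENNReal.ofReal p.2.1 * kk ε W p.2.1 p.2.2) (x, y, z)

/-- The double integral in the profile equation. -/
noncomputable def FF (ε : ℝ) (W : ℝ → ℝ → ℝ) (φ : ℝ → ℝ) (x : ℝ) : ℝ≥0∞ :=
  ∫⁻ y, ∫⁻ z, TT ε W x y z ∂(nu φ) ∂(nu φ)

theorem kk_pos {ε : ℝ} {W : ℝ → ℝ → ℝ} {y z : ℝ} (hy : 0 < y) (hz : 0 < z) :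
    kk ε W y z = ENNReal.ofReal (Kern ε W y z) := by
  have hm : ((y, z) : ℝ × ℝ) ∈ Ioi (0:ℝ) ×ˢ Ioi (0:ℝ) := mk_mem_prod hy hz
  unfold kk
  rw [indicator_of_mem hm]

theorem kk_meas {α ε : ℝ} {W : ℝ → ℝ → ℝ} (hW : GoodW α W) :
    Measurable (Function.uncurry (kk ε W)) := by
  classical
  have h1 : ContinuousOn (fun p : ℝ × ℝ => Kern ε W p.1 p.2) (Ioi (0:ℝ) ×ˢ Ioi (0:ℝ)) := by
    unfold Kern
    exact continuousOn_const.add (continuousOn_const.mul hW.1)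
  have h2 := ContinuousOn.measurable_piecewise (g := fun _ => (0:ℝ)) h1 continuousOn_const
    (measurableSet_Ioi.prod measurableSet_Ioi)
  have h3 := h2.ennreal_ofReal
  rw [show (fun _ : ℝ × ℝ => (0:ℝ)) = 0 from rfl, Set.piecewise_eq_indicator] at h3
  exact h3

theorem TT_meas {α ε : ℝ} {W : ℝ → ℝ → ℝ} (hW : GoodW α W) :
    Measurable (fun p : ℝ × ℝ × ℝ => TT ε W p.1 p.2.1 p.2.2) := by
  have h1 : Measurable fun p : ℝ × ℝ × ℝ => ENNReal.ofReal p.2.1 := by fun_prop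
  have h2 : Measurable fun p : ℝ × ℝ × ℝ => kk ε W p.2.1 p.2.2 :=
    (kk_meas hW).comp measurable_snd
  have ha : Measurable fun p : ℝ × ℝ × ℝ => p.1 := by fun_prop
  have hb : Measurable fun p : ℝ × ℝ × ℝ => p.2.1 := by fun_prop
  have hc : Measurable fun p : ℝ × ℝ × ℝ => p.2.1 + p.2.2 := by fun_prop
  exact (h1.mul h2).indicator ((measurableSet_lt hb ha).inter (measurableSet_lt ha hc))

theorem TT_meas2 {α ε : ℝ} {W : ℝ → ℝ → ℝ} (hW : GoodW α W) (x : ℝ) :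
    Measurable (fun p : ℝ × ℝ => TT ε W x p.1 p.2) :=
  (TT_meas hW).comp (by fun_prop : Measurable fun p : ℝ × ℝ => (x, p.1, p.2))

theorem TT_meas1 {α ε : ℝ} {W : ℝ → ℝ → ℝ} (hW : GoodW α W) (x y : ℝ) :
    Measurable (fun z : ℝ => TT ε W x y z) :=
  (TT_meas hW).comp (by fun_prop : Measurable fun z : ℝ => (x, y, z))

theorem FF_meas {α ε : ℝ} {W : ℝ → ℝ → ℝ} (hW : GoodW α W) (φ : ℝ → ℝ) :
    Measurable (FF ε W φ) := by
  unfold FF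
  apply Measurable.lintegral_prod_right (f := fun x y => ∫⁻ z, TT ε W x y z ∂(nu φ))
  apply Measurable.lintegral_prod_right (f := fun (q : ℝ × ℝ) z => TT ε W q.1 q.2 z)
  exact (TT_meas hW).comp (by fun_prop : Measurable fun p : (ℝ × ℝ) × ℝ => (p.1.1, p.1.2, p.2))

theorem kk_hi {α ε : ℝ} {W : ℝ → ℝ → ℝ} (hW : GoodW α W) (hε : 0 ≤ ε) {y z : ℝ} (hy : 0 < y)
    (hz : 0 < z) : kk ε W y z ≤ ENNReal.ofReal (2 + ε * ((y / z) ^ α + (z / y) ^ α)) := by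
  rw [kk_pos hy hz]
  apply ENNReal.ofReal_le_ofReal
  unfold Kern
  have := (hW.2.2.2 y z hy hz).2
  gcongr

theorem kk_symm {α ε : ℝ} {W : ℝ → ℝ → ℝ} (hW : GoodW α W) {y z : ℝ} (hy : 0 < y)
    (hz : 0 < z) : kk ε W y z = kk ε W z y := by
  rw [kk_pos hy hz, kk_pos hz hy]
  unfold Kern
  rw [hW.2.1 y z hy hz]

theorem kbound {α ε δ b a : ℝ} (hα : α ∈ Ioo (0:ℝ) 1) (hε : 0 ≤ ε) (hδ : 0 < δ) (ha : 0 < a)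
    {y z : ℝ} (hy : δ ≤ y) (hyb : y ≤ b) (hz : a ≤ z) :
    2 + ε * ((y / z) ^ α + (z / y) ^ α) ≤ ((2 + ε * (2 + b / a)) / a + ε / δ) * z := by
  have hy0 : 0 < y := hδ.trans_le hy
  have hz0 : 0 < z := ha.trans_le hz
  have hb0 : 0 < b := hy0.trans_le hyb
  have h1 : (y / z) ^ α ≤ 1 + b / a := by
    have := rpow_le_one_add_rpow (x := y / z) (q := 1) (by positivity) hα.1.le hα.2.le
    rw [rpow_one] at this
    have h2 : y / z ≤ b / a := by gcongr
    linarith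
  have h2 : (z / y) ^ α ≤ 1 + z / δ := by
    have := rpow_le_one_add_rpow (x := z / y) (q := 1) (by positivity) hα.1.le hα.2.le
    rw [rpow_one] at this
    have h2 : z / y ≤ z / δ := by gcongr
    linarith
  have h3 : 1 ≤ z / a := (one_le_div ha).2 hz
  calc 2 + ε * ((y / z) ^ α + (z / y) ^ α) ≤ 2 + ε * ((1 + b / a) + (1 + z / δ)) := by gcongr
    _ = (2 + ε * (2 + b / a)) * 1 + ε * (z / δ) := by ring
    _ ≤ (2 + ε * (2 + b / a)) * (z / a) + ε * (z / δ) := by gcongr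
    _ = _ := by ring

theorem prof_aemeas {K : ℝ → ℝ → ℝ} {φ : ℝ → ℝ} (hp : IsProfile K φ) :
    AEMeasurable (fun x => ENNReal.ofReal (φ x)) (volume.restrict (Ioi (0:ℝ))) :=
  (hp.1.aestronglyMeasurable).aemeasurable.ennreal_ofReal

theorem lint_nu {K : ℝ → ℝ → ℝ} {φ : ℝ → ℝ} (hp : IsProfile K φ) {g : ℝ → ℝ≥0∞}
    (hg : Measurable g) :
    ∫⁻ x, g x ∂(nu φ) = ∫⁻ x in Ioi 0, ENNReal.ofReal (φ x) * g x := by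
  unfold nu
  rw [lintegral_withDensity_eq_lintegral_mul₀ (prof_aemeas hp) hg.aemeasurable]
  rfl

theorem nu_pos (φ : ℝ → ℝ) : ∀ᵐ x ∂(nu φ), 0 < x := by
  unfold nu
  exact (withDensity_absolutelyContinuous _ _).ae_le (ae_restrict_mem measurableSet_Ioi)

theorem nu_ac (φ : ℝ → ℝ) : nu φ ≪ volume :=
  (withDensity_absolutelyContinuous _ _).trans Measure.restrict_le_self.absolutelyContinuous

theorem nu_mass {K : ℝ → ℝ → ℝ} {φ : ℝ → ℝ} (hp : IsProfile K φ) (hn : IsNormalised φ) :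
    ∫⁻ x, ENNReal.ofReal x ∂(nu φ) = 1 := by
  rw [lint_nu hp (by fun_prop), ← ENNReal.ofReal_one, ← hn, ofReal_integral_eq_lintegral_ofReal]
  · apply lintegral_congr_ae
    filter_upwards [hp.2.1, ae_restrict_mem measurableSet_Ioi] with x hx hx0
    rw [← ENNReal.ofReal_mul hx, mul_comm]
  · exact hp.2.2.1
  · filter_upwards [hp.2.1, ae_restrict_mem measurableSet_Ioi] with x hx hx0
    have : (0:ℝ) < x := hx0
    positivity

theorem TT_eq (ε : ℝ) (W : ℝ → ℝ → ℝ) (x y z : ℝ) :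
    TT ε W x y z = (Ioo y (y + z)).indicator (fun _ => ENNReal.ofReal y * kk ε W y z) x := by
  unfold TT
  by_cases h : y < x ∧ x < y + z
  · rw [indicator_of_mem (by exact h), indicator_of_mem (by exact h)]
  · rw [indicator_of_notMem (by exact h), indicator_of_notMem (by exact h)]

theorem inner_finite {α ε : ℝ} {W : ℝ → ℝ → ℝ} (hW : GoodW α W) (hα : α ∈ Ioo (0:ℝ) 1)
    (hε : 0 ≤ ε) {K : ℝ → ℝ → ℝ} {φ : ℝ → ℝ} (hp : IsProfile K φ) (hn : IsNormalised φ) {x y : ℝ}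
    (hy : 0 < y) (hyx : y < x) : ∫⁻ z, TT ε W x y z ∂(nu φ) ≠ ∞ := by
  set C := (2 + ε * (2 + y / (x - y))) / (x - y) + ε / y with hC
  have : ∫⁻ z, TT ε W x y z ∂(nu φ) ≤ ∫⁻ z, ENNReal.ofReal (y * C) * ENNReal.ofReal z ∂(nu φ) := by
    apply lintegral_mono_ae
    filter_upwards [nu_pos φ] with z hz
    rw [TT_eq]
    by_cases h : x ∈ Ioo y (y + z)
    · rw [indicator_of_mem h]
      have h1 := kk_hi (ε := ε) hW hε hy hz
      have hxy : 0 < x - y := sub_pos.2 hyx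
      have h2 := kbound (ε := ε) (y := y) (z := z) hα hε hy hxy le_rfl le_rfl (by linarith [h.2])
      have hC0 : 0 ≤ C := by positivity
      rw [ENNReal.ofReal_mul hy.le, mul_assoc, ← ENNReal.ofReal_mul hC0]
      gcongr
      exact h1.trans (ENNReal.ofReal_le_ofReal h2)
    · rw [indicator_of_notMem h]; positivity
  refine ne_top_of_le_ne_top ?_ this
  rw [lintegral_const_mul _ (by fun_prop), nu_mass hp hn]
  simp

theorem profile_eq {α ε : ℝ} {W : ℝ → ℝ → ℝ} (hW : GoodW α W) (hα : α ∈ Ioo (0:ℝ) 1)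
    (hε : 0 ≤ ε) {φ : ℝ → ℝ} (hp : IsProfile (Kern ε W) φ) (hn : IsNormalised φ) :
    ∀ᵐ x ∂(volume.restrict (Ioi (0:ℝ))), x ^ 2 * φ x = (FF ε W φ x).toReal := by
  filter_upwards [hp.2.2.2, ae_restrict_mem measurableSet_Ioi] with x hx hx0
  rw [hx]
  have hm1 : Measurable fun y => ∫⁻ z, TT ε W x y z ∂(nu φ) :=
    Measurable.lintegral_prod_right (f := fun y z => TT ε W x y z) (TT_meas2 hW x)
  have hFF : FF ε W φ x = ∫⁻ y in Ioo 0 x, ENNReal.ofReal (φ y) * ∫⁻ z, TT ε W x y z ∂(nu φ) := by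
    unfold FF
    rw [lint_nu hp hm1, ← lintegral_indicator measurableSet_Ioi,
      ← lintegral_indicator measurableSet_Ioo]
    congr 1
    ext y
    by_cases hy : y ∈ Ioo 0 x
    · rw [indicator_of_mem hy, indicator_of_mem (by exact hy.1)]
    · rw [indicator_of_notMem hy]
      by_cases hy0 : 0 < y
      · rw [indicator_of_mem (by exact hy0)]
        have hxy : x ≤ y := by
          by_contra hc
          exact hy ⟨hy0, not_le.1 hc⟩
        have : ∀ z, TT ε W x y z = 0 := fun z => by
          rw [TT_eq, indicator_of_notMem (fun h => absurd h.1 (not_lt.2 hxy))]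
        simp [this]
      · rw [indicator_of_notMem (by exact hy0)]
  have hsub : (Ioo 0 x : Set ℝ) ⊆ Ioi 0 := fun y hy => hy.1
  have hnn := ae_restrict_of_ae_restrict_of_subset hsub hp.2.1
  have hinner : ∀ᵐ y ∂(volume.restrict (Ioo 0 x)),
      ∫ z in Ioi (x - y), y * Kern ε W y z * φ y * φ z =
        (ENNReal.ofReal (φ y) * ∫⁻ z, TT ε W x y z ∂(nu φ)).toReal := by
    filter_upwards [hnn, ae_restrict_mem measurableSet_Ioo] with y hy0 hy
    have hsub2 : Ioi (x - y) ⊆ Ioi (0:ℝ) := fun z hz => by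
      have h1 : x - y < z := hz
      have h2 := hy.2
      show 0 < z
      linarith
    have hnn2 := ae_restrict_of_ae_restrict_of_subset hsub2 hp.2.1
    have hpos : ∀ᵐ z ∂(volume.restrict (Ioi (x - y))), 0 ≤ y * Kern ε W y z * φ y * φ z := by
      filter_upwards [hnn2, ae_restrict_mem measurableSet_Ioi] with z hz1 hz
      have hz0 : 0 < z := hsub2 hz
      have hk : 0 ≤ Kern ε W y z := by
        have := (hW.2.2.2 y z hy.1 hz0).1
        unfold Kern; positivity
      have := hy.1
      positivity
    rw [lint_nu hp (TT_meas1 hW x y), ← lintegral_const_mul' _ _ ENNReal.ofReal_ne_top]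
    have hset : ∫⁻ z in Ioi 0, ENNReal.ofReal (φ y) * (ENNReal.ofReal (φ z) * TT ε W x y z)
        = ∫⁻ z in Ioi (x - y), ENNReal.ofReal (y * Kern ε W y z * φ y * φ z) := by
      have : ∫⁻ z in Ioi 0, ENNReal.ofReal (φ y) * (ENNReal.ofReal (φ z) * TT ε W x y z)
         = ∫⁻ z in Ioi (x - y), ENNReal.ofReal (φ y) * (ENNReal.ofReal (φ z) * TT ε W x y z) := by
        rw [← lintegral_indicator measurableSet_Ioi, ← lintegral_indicator measurableSet_Ioi]
        congr 1
        ext z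
        by_cases hz : x - y < z
        · rw [indicator_of_mem (by exact hsub2 hz), indicator_of_mem (by exact hz)]
        · rw [indicator_of_notMem (s := Ioi (x - y)) (by exact hz)]
          have : TT ε W x y z = 0 := by
            rw [TT_eq, indicator_of_notMem]
            rintro ⟨h1, h2⟩
            exact hz (by linarith)
          by_cases hz3 : z ∈ Ioi (0:ℝ)
          · rw [indicator_of_mem hz3, this]
            simp
          · rw [indicator_of_notMem hz3]
      rw [this]
      apply lintegral_congr_ae
      filter_upwards [hnn2, ae_restrict_mem measurableSet_Ioi] with z hz1 hz
      have hz0 : 0 < z := hsub2 hz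
      have hk : 0 ≤ Kern ε W y z := by
        have := (hW.2.2.2 y z hy.1 hz0).1
        unfold Kern; positivity
      have hz' : x - y < z := hz
      have hm : x ∈ Ioo y (y + z) := ⟨hy.2, by linarith⟩
      rw [TT_eq, indicator_of_mem hm, kk_pos hy.1 hz0,
        ← ENNReal.ofReal_mul hy.1.le, ← ENNReal.ofReal_mul hz1, ← ENNReal.ofReal_mul hy0]
      congr 1; ring
    rw [hset]
    rw [integral_eq_lintegral_of_nonneg_ae hpos]
    have hkm : AEStronglyMeasurable (fun z => Kern ε W y z) (volume.restrict (Ioi (x - y))) := by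
      apply ContinuousOn.aestronglyMeasurable _ measurableSet_Ioi
      unfold Kern
      refine continuousOn_const.add (continuousOn_const.mul ?_)
      exact hW.1.comp (f := fun z : ℝ => (y, z)) (by fun_prop) (fun z hz => ⟨hy.1, hsub2 hz⟩)
    have hφm : AEStronglyMeasurable φ (volume.restrict (Ioi (x - y))) :=
      hp.1.aestronglyMeasurable.mono_measure (Measure.restrict_mono hsub2 le_rfl)
    exact ((hkm.const_mul y).mul_const (φ y)).mul hφm
  rw [integral_congr_ae hinner, integral_toReal, hFF]
  · exact (((prof_aemeas hp).mono_measure (Measure.restrict_mono hsub le_rfl)).mul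
      hm1.aemeasurable)
  · filter_upwards [ae_restrict_mem measurableSet_Ioo] with y hy
    exact ENNReal.mul_lt_top (by simp) (inner_finite hW hα hε hp hn hy.1 hy.2).lt_top

theorem tonelli_FF {α ε : ℝ} {W : ℝ → ℝ → ℝ} (hW : GoodW α W) (φ : ℝ → ℝ) {g : ℝ → ℝ≥0∞}
    (hg : Measurable g) :
    ∫⁻ x, FF ε W φ x * g x = ∫⁻ y, ∫⁻ z, ENNReal.ofReal y * kk ε W y z *
      (∫⁻ x in Ioo y (y + z), g x) ∂(nu φ) ∂(nu φ) := by
  have hm1 : ∀ x, Measurable fun y => ∫⁻ z, TT ε W x y z ∂(nu φ) := fun x =>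
    Measurable.lintegral_prod_right (f := fun y z => TT ε W x y z) (TT_meas2 hW x)
  have hT3 : Measurable fun p : (ℝ × ℝ) × ℝ => TT ε W p.1.1 p.1.2 p.2 * g p.1.1 :=
    ((TT_meas hW).comp (by fun_prop : Measurable fun p : (ℝ × ℝ) × ℝ => (p.1.1, p.1.2, p.2))).mul
      (hg.comp (by fun_prop : Measurable fun p : (ℝ × ℝ) × ℝ => p.1.1))
  have e1 : ∀ x, FF ε W φ x * g x = ∫⁻ y, ∫⁻ z, TT ε W x y z * g x ∂(nu φ) ∂(nu φ) := by
    intro x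
    unfold FF
    rw [← lintegral_mul_const _ (hm1 x)]
    congr 1; ext y
    rw [← lintegral_mul_const _ (TT_meas1 hW x y)]
  simp_rw [e1]
  rw [lintegral_lintegral_swap]
  · congr 1; ext y
    rw [lintegral_lintegral_swap]
    · congr 1; ext z
      have : ∀ x, TT ε W x y z * g x = (Ioo y (y + z)).indicator
          (fun x => (ENNReal.ofReal y * kk ε W y z) * g x) x := by
        intro x
        rw [TT_eq]
        by_cases h : x ∈ Ioo y (y + z)
        · rw [indicator_of_mem h, indicator_of_mem h]
        · rw [indicator_of_notMem h, indicator_of_notMem h, zero_mul]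
      simp_rw [this]
      rw [lintegral_indicator measurableSet_Ioo, lintegral_const_mul _ hg]
    · exact (hT3.comp (by fun_prop : Measurable fun p : ℝ × ℝ => ((p.1, y), p.2))).aemeasurable
  · exact (Measurable.lintegral_prod_right
      (f := fun (p : ℝ × ℝ) z => TT ε W p.1 p.2 z * g p.1) hT3).aemeasurable

/-- Kernel restricted to small first and large second argument. -/
noncomputable def GG (ε : ℝ) (W : ℝ → ℝ → ℝ) (a d y z : ℝ) : ℝ≥0∞ :=
  (Iio d ×ˢ Ioi a).indicator (fun p : ℝ × ℝ => ENNReal.ofReal p.1 * kk ε W p.1 p.2) (y, z)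

noncomputable def HH (ε : ℝ) (W : ℝ → ℝ → ℝ) (φ : ℝ → ℝ) (a d : ℝ) : ℝ≥0∞ :=
  ∫⁻ y, ∫⁻ z, GG ε W a d y z ∂(nu φ) ∂(nu φ)

theorem GG_meas {α ε : ℝ} {W : ℝ → ℝ → ℝ} (hW : GoodW α W) (a d : ℝ) :
    Measurable (fun p : ℝ × ℝ => GG ε W a d p.1 p.2) := by
  have h1 : Measurable fun p : ℝ × ℝ => ENNReal.ofReal p.1 := by fun_prop
  have h2 : Measurable fun p : ℝ × ℝ => kk ε W p.1 p.2 := kk_meas hW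
  exact (h1.mul h2).indicator (measurableSet_Iio.prod measurableSet_Ioi)

theorem GG_mem {ε : ℝ} {W : ℝ → ℝ → ℝ} {a d y z : ℝ} (hy : y < d) (hz : a < z) :
    GG ε W a d y z = ENNReal.ofReal y * kk ε W y z := by
  have hm : ((y, z) : ℝ × ℝ) ∈ Iio d ×ˢ Ioi a := mk_mem_prod hy hz
  unfold GG
  rw [indicator_of_mem hm]

theorem GG_notMem {ε : ℝ} {W : ℝ → ℝ → ℝ} {a d y z : ℝ} (h : ¬ (y < d ∧ a < z)) :
    GG ε W a d y z = 0 := by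
  have hm : ((y, z) : ℝ × ℝ) ∉ Iio d ×ˢ Ioi a := h
  unfold GG
  rw [indicator_of_notMem hm]

theorem HH_diff {α ε : ℝ} {W : ℝ → ℝ → ℝ} (hW : GoodW α W) (hα : α ∈ Ioo (0:ℝ) 1)
    (hε : 0 ≤ ε) {K : ℝ → ℝ → ℝ} {φ : ℝ → ℝ} (hp : IsProfile K φ) (hn : IsNormalised φ)
    {a x d : ℝ} (ha : 0 < a) (hx : 0 < x) (hd : 0 < d) (h : HH ε W φ a x ≠ ∞) :
    HH ε W φ a d ≠ ∞ := by
  set C := (2 + ε * (2 + d / a)) / a + ε / x with hC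
  have hC0 : 0 ≤ C := by positivity
  have : HH ε W φ a d ≤ ∫⁻ y, ∫⁻ z, (GG ε W a x y z +
      ENNReal.ofReal C * ENNReal.ofReal y * ENNReal.ofReal z) ∂(nu φ) ∂(nu φ) := by
    apply dmono (nu_pos φ)
    intro y z hy hz
    by_cases h1 : y < d ∧ a < z
    · rw [GG_mem h1.1 h1.2]
      by_cases h2 : y < x
      · rw [GG_mem h2 h1.2]
        exact le_self_add
      · refine le_trans ?_ le_add_self
        have h3 := kk_hi (ε := ε) hW hε hy hz
        have h4 := kbound (ε := ε) hα hε hx ha (not_lt.1 h2) h1.1.le h1.2.le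
        calc ENNReal.ofReal y * kk ε W y z ≤ ENNReal.ofReal y * ENNReal.ofReal (C * z) := by
              gcongr
              exact h3.trans (ENNReal.ofReal_le_ofReal h4)
          _ = _ := by rw [ENNReal.ofReal_mul hC0]; ring
    · rw [GG_notMem h1]; positivity
  refine ne_top_of_le_ne_top ?_ this
  have e : ∀ y, ∫⁻ z, (GG ε W a x y z +
      ENNReal.ofReal C * ENNReal.ofReal y * ENNReal.ofReal z) ∂(nu φ) =
      ∫⁻ z, GG ε W a x y z ∂(nu φ) + ENNReal.ofReal C * ENNReal.ofReal y := by
    intro y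
    rw [lintegral_add_right _ (by fun_prop), lintegral_const_mul _ (by fun_prop), nu_mass hp hn,
      mul_one]
  simp_rw [e]
  rw [lintegral_add_right _ (by fun_prop), lintegral_const_mul _ (by fun_prop), nu_mass hp hn,
      mul_one]
  exact ENNReal.add_ne_top.2 ⟨h, by simp⟩

theorem HH_le_FF {ε : ℝ} {W : ℝ → ℝ → ℝ} {φ : ℝ → ℝ} {a x : ℝ} (hxa : x < a) :
    HH ε W φ a x ≤ FF ε W φ x := by
  unfold HH FF
  apply dmono (nu_pos φ)
  intro y z hy hz
  by_cases h1 : y < x ∧ a < z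
  · rw [GG_mem h1.1 h1.2, TT_eq, indicator_of_mem]
    exact ⟨h1.1, by linarith⟩
  · rw [GG_notMem h1]; positivity

theorem HH_finite {α ε : ℝ} {W : ℝ → ℝ → ℝ} (hW : GoodW α W) (hα : α ∈ Ioo (0:ℝ) 1)
    (hε : 0 ≤ ε) {φ : ℝ → ℝ} (hp : IsProfile (Kern ε W) φ) (hn : IsNormalised φ)
    {a d : ℝ} (ha : 0 < a) (hd : 0 < d) : HH ε W φ a d ≠ ∞ := by
  intro hH
  have h1 : ∀ x, 0 < x → HH ε W φ a x = ∞ := fun x hx => by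
    by_contra hc
    exact HH_diff hW hα hε hp hn ha hx hd hc hH
  have h2 : ∀ᵐ x ∂(volume.restrict (Ioi (0:ℝ))), x < a → φ x = 0 := by
    filter_upwards [profile_eq hW hα hε hp hn, ae_restrict_mem measurableSet_Ioi] with x hx hx0 hxa
    have hx0' : 0 < x := hx0
    have : FF ε W φ x = ∞ := top_le_iff.1 ((h1 x hx0').symm.le.trans (HH_le_FF hxa))
    rw [this, ENNReal.toReal_top] at hx
    have hne : x ^ 2 ≠ 0 := by positivity
    exact (mul_eq_zero.1 hx).resolve_left hne
  have h3 : nu φ (Iio a) = 0 := by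
    unfold nu
    rw [withDensity_apply _ measurableSet_Iio, ← lintegral_indicator measurableSet_Iio,
      ← lintegral_zero (μ := volume.restrict (Ioi (0:ℝ)))]
    apply lintegral_congr_ae
    filter_upwards [h2] with x hx
    by_cases hxa : x < a
    · rw [indicator_of_mem (by exact hxa), hx hxa]; simp
    · rw [indicator_of_notMem (by exact hxa)]
  have h4 : HH ε W φ a a = 0 := by
    unfold HH
    rw [← lintegral_zero (μ := nu φ)]
    apply lintegral_congr_ae
    have h5 : ∀ᵐ y ∂(nu φ), y ∉ Iio a := measure_eq_zero_iff_ae_notMem.1 h3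
    filter_upwards [h5] with y hy
    have : ∀ z, GG ε W a a y z = 0 := fun z => GG_notMem (fun h => hy h.1)
    simp [this]
  rw [h1 a ha] at h4
  exact ENNReal.top_ne_zero h4

theorem FF_int_finite {α ε : ℝ} {W : ℝ → ℝ → ℝ} (hW : GoodW α W) (hα : α ∈ Ioo (0:ℝ) 1)
    (hε : 0 ≤ ε) {φ : ℝ → ℝ} (hp : IsProfile (Kern ε W) φ) (hn : IsNormalised φ)
    {a b : ℝ} (ha : 0 < a) (hab : a < b) : ∫⁻ x in Ioo a b, FF ε W φ x ≠ ∞ := by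
  have hb : 0 < b := ha.trans hab
  have e1 : ∫⁻ x in Ioo a b, FF ε W φ x
      = ∫⁻ x, FF ε W φ x * (Ioo a b).indicator (fun _ => 1) x := by
    rw [← lintegral_indicator measurableSet_Ioo]
    congr 1; ext x
    by_cases h : x ∈ Ioo a b
    · simp [h]
    · simp [h]
  rw [e1, tonelli_FF hW φ (measurable_const.indicator measurableSet_Ioo)]
  have hle : ∫⁻ y, ∫⁻ z, ENNReal.ofReal y * kk ε W y z *
      (∫⁻ x in Ioo y (y + z), (Ioo a b).indicator (fun _ => 1) x) ∂(nu φ) ∂(nu φ) ≤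
      ∫⁻ y, ∫⁻ z, ENNReal.ofReal b * (GG ε W (a / 2) b y z + GG ε W (a / 2) b z y)
        ∂(nu φ) ∂(nu φ) := by
    apply dmono (nu_pos φ)
    intro y z hy hz
    have e2 : ∫⁻ x in Ioo y (y + z), (Ioo a b).indicator (fun _ => (1:ℝ≥0∞)) x
        = volume (Ioo a b ∩ Ioo y (y + z)) := by
      rw [lintegral_indicator measurableSet_Ioo, setLIntegral_const, one_mul,
        Measure.restrict_apply measurableSet_Ioo]
    rw [e2]
    by_cases hne : (Ioo a b ∩ Ioo y (y + z)).Nonempty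
    · obtain ⟨t, ht1, ht2⟩ := hne
      have hyb : y < b := ht2.1.trans ht1.2
      by_cases hza : a / 2 < z
      · rw [GG_mem hyb hza]
        have hv : volume (Ioo a b ∩ Ioo y (y + z)) ≤ ENNReal.ofReal b := by
          refine (measure_mono inter_subset_left).trans ?_
          rw [Real.volume_Ioo]
          exact ENNReal.ofReal_le_ofReal (by linarith)
        calc _ ≤ ENNReal.ofReal y * kk ε W y z * ENNReal.ofReal b := by gcongr
          _ = ENNReal.ofReal b * (ENNReal.ofReal y * kk ε W y z) := by ring
          _ ≤ _ := by gcongr; exact le_self_add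
      · have hya : a / 2 < y := by linarith [ht1.1, ht2.2]
        have hzb : z < b := by linarith
        rw [GG_mem hzb hya, kk_symm hW hz hy]
        have hv : volume (Ioo a b ∩ Ioo y (y + z)) ≤ ENNReal.ofReal z := by
          refine (measure_mono inter_subset_right).trans ?_
          rw [Real.volume_Ioo]
          exact ENNReal.ofReal_le_ofReal (by linarith)
        calc _ ≤ ENNReal.ofReal b * kk ε W y z * ENNReal.ofReal z := by gcongr
          _ = ENNReal.ofReal b * (ENNReal.ofReal z * kk ε W y z) := by ring
          _ ≤ _ := by gcongr; exact le_add_self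
    · rw [not_nonempty_iff_eq_empty.1 hne]
      simp
  refine ne_top_of_le_ne_top ?_ hle
  have hG : Measurable fun p : ℝ × ℝ => GG ε W (a / 2) b p.1 p.2 := GG_meas hW _ _
  have hG' : Measurable fun p : ℝ × ℝ => GG ε W (a / 2) b p.2 p.1 := hG.comp measurable_swap
  have hG1 : ∀ y, Measurable fun z => GG ε W (a / 2) b y z := fun y =>
    hG.comp (by fun_prop : Measurable fun z : ℝ => (y, z))
  have hG2 : ∀ y, Measurable fun z => GG ε W (a / 2) b z y := fun y =>
    hG.comp (by fun_prop : Measurable fun z : ℝ => (z, y))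
  have hGi : Measurable fun y => ∫⁻ z, GG ε W (a / 2) b y z ∂(nu φ) :=
    Measurable.lintegral_prod_right (f := fun y z => GG ε W (a / 2) b y z) hG
  have e3 : ∀ y, ∫⁻ z, ENNReal.ofReal b * (GG ε W (a / 2) b y z + GG ε W (a / 2) b z y) ∂(nu φ)
      = ENNReal.ofReal b * (∫⁻ z, GG ε W (a / 2) b y z ∂(nu φ)
        + ∫⁻ z, GG ε W (a / 2) b z y ∂(nu φ)) := by
    intro y
    rw [lintegral_const_mul' _ _ ENNReal.ofReal_ne_top, lintegral_add_left (hG1 y)]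
  simp_rw [e3]
  rw [lintegral_const_mul' _ _ ENNReal.ofReal_ne_top, lintegral_add_left hGi,
    lintegral_lintegral_swap (f := fun y z => GG ε W (a / 2) b z y) hG'.aemeasurable]
  have hfin := HH_finite hW hα hε hp hn (half_pos ha) hb
  exact ENNReal.mul_ne_top ENNReal.ofReal_ne_top (ENNReal.add_ne_top.2 ⟨hfin, hfin⟩)

theorem FF_finite {α ε : ℝ} {W : ℝ → ℝ → ℝ} (hW : GoodW α W) (hα : α ∈ Ioo (0:ℝ) 1)
    (hε : 0 ≤ ε) {φ : ℝ → ℝ} (hp : IsProfile (Kern ε W) φ) (hn : IsNormalised φ) :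
    ∀ᵐ x ∂(volume.restrict (Ioi (0:ℝ))), FF ε W φ x < ∞ := by
  have hc : Ioi (0:ℝ) ⊆ ⋃ n : ℕ, Ioo (1 / ((n:ℝ) + 2)) ((n:ℝ) + 2) := by
    intro x hx
    have hx0 : 0 < x := hx
    obtain ⟨n, hn⟩ := exists_nat_gt (max x (1 / x))
    refine mem_iUnion.2 ⟨n, ?_, ?_⟩
    · rw [div_lt_iff₀ (by positivity)]
      have := (le_max_right x (1 / x)).trans_lt hn
      rw [div_lt_iff₀ hx0] at this
      nlinarith
    · have := (le_max_left x (1 / x)).trans_lt hn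
      linarith
  refine ae_restrict_of_ae_restrict_of_subset hc ?_
  rw [ae_restrict_iUnion_iff]
  intro n
  refine ae_lt_top (FF_meas hW φ) (FF_int_finite hW hα hε hp hn (by positivity) ?_)
  rw [div_lt_iff₀ (by positivity)]
  have : (0:ℝ) ≤ n := by positivity
  nlinarith

theorem goodMeas_nu {α ε : ℝ} {W : ℝ → ℝ → ℝ} (hW : GoodW α W) (hα : α ∈ Ioo (0:ℝ) 1)
    (hε : 0 ≤ ε) {φ : ℝ → ℝ} (hp : IsProfile (Kern ε W) φ) (hn : IsNormalised φ) :
    GoodMeas (nu φ) (kk ε W) α ε where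
  pos := nu_pos φ
  noatom := fun x => nu_ac φ (by simp)
  meas := kk_meas hW
  symm := fun y z hy hz => kk_symm hW hy hz
  lo := fun y z hy hz => by
    rw [kk_pos hy hz, show (2:ℝ≥0∞) = ENNReal.ofReal 2 by simp]
    apply ENNReal.ofReal_le_ofReal
    unfold Kern
    have := (hW.2.2.2 y z hy hz).1
    nlinarith [mul_nonneg hε this]
  hi := fun y z hy hz => kk_hi hW hε hy hz
  mass := nu_mass hp hn
  test := fun g hg => by
    rw [lint_nu hp (by fun_prop)]
    have e1 : ∫⁻ x in Ioi 0, ENNReal.ofReal (φ x) * (ENNReal.ofReal (x ^ 2) * g x)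
        = ∫⁻ x, FF ε W φ x * (Ioi 0).indicator g x := by
      rw [← lintegral_indicator measurableSet_Ioi]
      have h := FF_finite hW hα hε hp hn
      have h' := profile_eq hW hα hε hp hn
      rw [ae_restrict_iff' measurableSet_Ioi] at h h'
      have h'' := hp.2.1
      rw [ae_restrict_iff' measurableSet_Ioi] at h''
      apply lintegral_congr_ae
      filter_upwards [h, h', h''] with x h1 h2 h3
      by_cases hx : x ∈ Ioi (0:ℝ)
      · rw [indicator_of_mem hx, indicator_of_mem hx, ← mul_assoc, ← ENNReal.ofReal_mul (h3 hx),
          mul_comm (φ x), h2 hx, ENNReal.ofReal_toReal (h1 hx).ne]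
      · rw [indicator_of_notMem hx, indicator_of_notMem hx, mul_zero]
    rw [e1, tonelli_FF hW φ (hg.indicator measurableSet_Ioi)]
    apply dcongr (nu_pos φ)
    intro y z hy hz
    congr 1
    apply setLIntegral_congr_fun measurableSet_Ioo
    intro x hx
    exact indicator_of_mem (show (0:ℝ) < x from hy.trans hx.1) g

theorem weight_meas (a b : ℝ) : Measurable (weight a b) := by
  unfold weight
  exact Measurable.ite measurableSet_Iic (by fun_prop) (by fun_prop)

theorem weight_le {a b x : ℝ} (hx : 0 < x) : weight a b x ≤ x ^ a + x ^ b := by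
  have h1 : 0 < x ^ a := by positivity
  have h2 : 0 < x ^ b := by positivity
  unfold weight
  split_ifs <;> linarith

theorem weight_nonneg {a b x : ℝ} (hx : 0 < x) : 0 ≤ weight a b x := by
  unfold weight
  split_ifs <;> positivity

theorem prof_moment {α ε p : ℝ} {W : ℝ → ℝ → ℝ} {φ : ℝ → ℝ}
    (hp : IsProfile (Kern ε W) φ) (h : ∫⁻ x, ENNReal.ofReal (x ^ p) ∂(nu φ) ≠ ∞) :
    IntegrableOn (fun z => φ z * z ^ p) (Ioi 0) := by
  rw [lint_nu hp (by fun_prop)] at h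
  refine ⟨hp.1.aestronglyMeasurable.mul
    (by fun_prop : Measurable fun z : ℝ => z ^ p).aestronglyMeasurable, ?_⟩
  rw [hasFiniteIntegral_iff_ofReal]
  · refine lt_of_le_of_lt (le_of_eq ?_) h.lt_top
    apply lintegral_congr_ae
    filter_upwards [hp.2.1] with x hx
    rw [ENNReal.ofReal_mul hx]
  · filter_upwards [hp.2.1, ae_restrict_mem measurableSet_Ioi] with x hx hx0
    have : (0:ℝ) < x := hx0
    positivity

theorem prof_memX {α β ε : ℝ} {W : ℝ → ℝ → ℝ} (hW : GoodW α W) (hα : α ∈ Ioo (0:ℝ) 1)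
    (hβ : β ∈ Ioo (1 + α) 2) (hε : 0 ≤ ε) (hε' : ε ≤ (1-α)^2/16*((1-α)/4)^(2-α)) {φ : ℝ → ℝ}
    (hp : IsProfile (Kern ε W) φ) (hn : IsNormalised φ) : MemX (-α) β φ := by
  have hm := (goodMeas_nu hW hα hε hp hn).finite_moments hα hε hε'
    (b := β) (by linarith [hβ.1, hα.1]) hβ.2.le
  have h1 := prof_moment (α := α) hp hm.1
  have h2 := prof_moment (α := α) hp hm.2
  refine Integrable.mono' (h1.add h2) (hp.1.aestronglyMeasurable.mul
    (weight_meas _ _).aestronglyMeasurable) ?_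
  filter_upwards [hp.2.1, ae_restrict_mem measurableSet_Ioi] with x hx hx0
  have hw := weight_nonneg (a := -α) (b := β) hx0
  rw [Real.norm_of_nonneg (by positivity), Pi.add_apply, ← mul_add]
  exact mul_le_mul_of_nonneg_left (weight_le hx0) hx

theorem W_le {α β : ℝ} {W : ℝ → ℝ → ℝ} (hW : GoodW α W) (hα : α ∈ Ioo (0:ℝ) 1)
    (hβ : β ∈ Ioo (1 + α) 2) {y z : ℝ} (hy : 0 < y) (hz : 0 < z) :
    |W y z| ≤ (y ^ α + y ^ (-α)) * weight (-α) β z := by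
  have h := hW.2.2.2 y z hy hz
  rw [abs_of_nonneg h.1]
  have h1 : z ^ (-α) ≤ weight (-α) β z := by
    unfold weight
    split_ifs with hz1
    · exact le_rfl
    · exact rpow_le_rpow_of_exponent_le (not_le.1 hz1).le (by linarith [hβ.1, hα.1])
  have h2 : z ^ α ≤ weight (-α) β z := by
    unfold weight
    split_ifs with hz1
    · exact rpow_le_rpow_of_exponent_ge hz hz1 (by linarith [hα.1])
    · exact rpow_le_rpow_of_exponent_le (not_le.1 hz1).le (by linarith [hβ.1, hα.1])
  have e1 : (y / z) ^ α = y ^ α * z ^ (-α) := by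
    rw [div_rpow hy.le hz.le, rpow_neg hz.le]; rfl
  have e2 : (z / y) ^ α = y ^ (-α) * z ^ α := by
    rw [div_rpow hz.le hy.le, rpow_neg hy.le, mul_comm]; rfl
  calc W y z ≤ y ^ α * z ^ (-α) + y ^ (-α) * z ^ α := by rw [← e1, ← e2]; exact h.2
    _ ≤ y ^ α * weight (-α) β z + y ^ (-α) * weight (-α) β z := by gcongr
    _ = _ := by ring

theorem Wint {α β : ℝ} {W : ℝ → ℝ → ℝ} (hW : GoodW α W) (hα : α ∈ Ioo (0:ℝ) 1)
    (hβ : β ∈ Ioo (1 + α) 2) {f : ℝ → ℝ}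
    (hfm : AEStronglyMeasurable f (volume.restrict (Ioi (0:ℝ)))) (hf : MemX (-α) β f)
    {y : ℝ} (hy : 0 < y) : IntegrableOn (fun z => W y z * f z) (Ioi 0) ∧
      |betaW W f y| ≤ (y ^ α + y ^ (-α)) * Xnorm (-α) β f := by
  have hb : ∀ᵐ z ∂(volume.restrict (Ioi (0:ℝ))), ‖W y z * f z‖ ≤
      (y ^ α + y ^ (-α)) * (|f z| * weight (-α) β z) := by
    filter_upwards [ae_restrict_mem measurableSet_Ioi] with z hz
    rw [norm_mul, Real.norm_eq_abs, Real.norm_eq_abs, mul_comm |f z|, ← mul_assoc]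
    exact mul_le_mul_of_nonneg_right (W_le hW hα hβ hy hz) (abs_nonneg _)
  have hi : IntegrableOn (fun z => |f z| * weight (-α) β z) (Ioi 0) := by
    refine (Integrable.abs hf).congr ?_
    filter_upwards [ae_restrict_mem measurableSet_Ioi] with z hz
    rw [abs_mul, abs_of_nonneg (weight_nonneg hz)]
  have hm : AEStronglyMeasurable (fun z => W y z * f z) (volume.restrict (Ioi (0:ℝ))) := by
    refine AEStronglyMeasurable.mul ?_ hfm
    apply ContinuousOn.aestronglyMeasurable _ measurableSet_Ioi
    exact hW.1.comp (f := fun z : ℝ => (y, z)) (by fun_prop) (fun z hz => ⟨hy, hz⟩)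
  refine ⟨Integrable.mono' (hi.const_mul _) hm hb, ?_⟩
  have := norm_integral_le_of_norm_le (hi.const_mul (y ^ α + y ^ (-α))) hb
  rw [integral_const_mul] at this
  exact this

/-- The majorant of the integrand of `Phi`. -/
noncomputable def RR (α y : ℝ) : ℝ := (y ^ α + y ^ (-α)) / y * exp (-y)

theorem RR_eq {α y : ℝ} (hy : 0 < y) :
    RR α y = (y ^ (α - 1) + y ^ (-α - 1)) * exp (-y) := by
  unfold RR
  rw [rpow_sub_one hy.ne', rpow_sub_one hy.ne']
  ring

theorem exp_int (x : ℝ) : IntegrableOn (fun y : ℝ => exp (-y)) (Ioi x) := by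
  simpa using exp_neg_integrableOn_Ioi x one_pos

theorem RR_int {α x : ℝ} (hα : α ∈ Ioo (0:ℝ) 1) (hx : 0 < x) : IntegrableOn (RR α) (Ioi x) := by
  refine Integrable.mono' ((exp_int x).const_mul (x ^ (α - 1) + x ^ (-α - 1)))
    (by unfold RR; exact Measurable.aestronglyMeasurable (by fun_prop)) ?_
  filter_upwards [ae_restrict_mem measurableSet_Ioi] with y hy
  have hy0 : 0 < y := hx.trans hy
  rw [RR_eq hy0, Real.norm_of_nonneg (by positivity)]
  have h1 : y ^ (α - 1) ≤ x ^ (α - 1) :=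
    rpow_le_rpow_of_nonpos hx (le_of_lt hy) (by linarith [hα.2])
  have h2 : y ^ (-α - 1) ≤ x ^ (-α - 1) :=
    rpow_le_rpow_of_nonpos hx (le_of_lt hy) (by linarith [hα.1])
  gcongr

theorem RR_bound {α x : ℝ} (hα : α ∈ Ioo (0:ℝ) 1) (hx : 0 < x) :
    ∫ y in Ioi x, RR α y ≤ (2 / α + 2) * weight (-α) (α - 1) x * exp (-x) := by
  have hα0 := hα.1
  by_cases hx1 : x ≤ 1
  · have hw : weight (-α) (α - 1) x = x ^ (-α) := if_pos hx1
    have hi : IntegrableOn (fun y : ℝ => y ^ (-α - 1)) (Ioi x) :=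
      integrableOn_Ioi_rpow_of_lt (by linarith) hx
    have hle : ∫ y in Ioi x, RR α y ≤
        ∫ y in Ioi x, (2 * exp (-x) * y ^ (-α - 1) + 2 * exp (-y)) := by
      refine setIntegral_mono_on (RR_int hα hx) ((hi.const_mul _).add ((exp_int x).const_mul _))
        measurableSet_Ioi ?_
      intro y hy
      have hxy : x < y := hy
      have hy0 : 0 < y := hx.trans hxy
      rw [RR_eq hy0]
      have he : exp (-y) ≤ exp (-x) := exp_le_exp.2 (by linarith)
      have hp1 : 0 < y ^ (-α - 1) := by positivity
      have hp2 := exp_pos (-y)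
      by_cases hy1 : y ≤ 1
      · have h1 : y ^ (α - 1) ≤ y ^ (-α - 1) :=
          rpow_le_rpow_of_exponent_ge hy0 hy1 (by linarith)
        calc (y ^ (α - 1) + y ^ (-α - 1)) * exp (-y)
            ≤ (y ^ (-α - 1) + y ^ (-α - 1)) * exp (-x) := by gcongr
          _ = 2 * exp (-x) * y ^ (-α - 1) := by ring
          _ ≤ _ := by linarith
      · have h1 : y ^ (α - 1) ≤ 1 :=
          rpow_le_one_of_one_le_of_nonpos (not_le.1 hy1).le (by linarith [hα.2])
        have h2 : y ^ (-α - 1) ≤ 1 :=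
          rpow_le_one_of_one_le_of_nonpos (not_le.1 hy1).le (by linarith)
        calc (y ^ (α - 1) + y ^ (-α - 1)) * exp (-y) ≤ (1 + 1) * exp (-y) := by gcongr
          _ = 2 * exp (-y) := by ring
          _ ≤ _ := by
            have : 0 ≤ 2 * exp (-x) * y ^ (-α - 1) := by positivity
            linarith
    refine hle.trans ?_
    rw [integral_add (hi.const_mul _) ((exp_int x).const_mul _), integral_const_mul,
      integral_const_mul, integral_Ioi_rpow_of_lt (by linarith) hx, integral_exp_neg_Ioi, hw]
    have e : -x ^ (-α - 1 + 1) / (-α - 1 + 1) = x ^ (-α) / α := by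
      rw [show -α - 1 + 1 = -α by ring, neg_div_neg_eq]
    rw [e]
    have h1 : 1 ≤ x ^ (-α) := one_le_rpow_of_pos_of_le_one_of_nonpos hx hx1 (by linarith)
    calc 2 * exp (-x) * (x ^ (-α) / α) + 2 * exp (-x)
        ≤ 2 * exp (-x) * (x ^ (-α) / α) + 2 * exp (-x) * x ^ (-α) := by
          have := exp_pos (-x)
          nlinarith
      _ = _ := by ring
  · have hx1' := not_le.1 hx1
    have hw : weight (-α) (α - 1) x = x ^ (α - 1) := if_neg hx1
    have hle : ∫ y in Ioi x, RR α y ≤ ∫ y in Ioi x, 2 * x ^ (α - 1) * exp (-y) := by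
      refine setIntegral_mono_on (RR_int hα hx) ((exp_int x).const_mul _)
        measurableSet_Ioi ?_
      intro y hy
      have hxy : x < y := hy
      have hy0 : 0 < y := hx.trans hxy
      rw [RR_eq hy0]
      have h1 : y ^ (α - 1) ≤ x ^ (α - 1) :=
        rpow_le_rpow_of_nonpos hx hxy.le (by linarith [hα.2])
      have h2 : y ^ (-α - 1) ≤ y ^ (α - 1) :=
        rpow_le_rpow_of_exponent_le (hx1'.trans hxy).le (by linarith)
      have : y ^ (α - 1) + y ^ (-α - 1) ≤ 2 * x ^ (α - 1) := by linarith
      gcongr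
    refine hle.trans ?_
    rw [integral_const_mul, integral_exp_neg_Ioi, hw]
    have : 0 < 2 / α := by positivity
    have h3 : 0 < x ^ (α - 1) := by positivity
    gcongr
    linarith

theorem phi_int {α β : ℝ} {W : ℝ → ℝ → ℝ} (hW : GoodW α W) (hα : α ∈ Ioo (0:ℝ) 1)
    (hβ : β ∈ Ioo (1 + α) 2) {f : ℝ → ℝ}
    (hfm : AEStronglyMeasurable f (volume.restrict (Ioi (0:ℝ)))) (hf : MemX (-α) β f)
    {x : ℝ} (hx : 0 < x) : IntegrableOn (fun y => betaW W f y / y * exp (-y)) (Ioi x) ∧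
      |∫ y in Ioi x, betaW W f y / y * exp (-y)| ≤ (∫ y in Ioi x, RR α y) * Xnorm (-α) β f := by
  have hsub : Ioi x ⊆ Ioi (0:ℝ) := Ioi_subset_Ioi hx.le
  have hm0 : AEStronglyMeasurable (fun y => betaW W f y) (volume.restrict (Ioi (0:ℝ))) := by
    unfold betaW
    refine AEStronglyMeasurable.integral_prod_right' (f := fun p : ℝ × ℝ => W p.1 p.2 * f p.2) ?_
    refine AEStronglyMeasurable.mul ?_ hfm.comp_snd
    rw [Measure.prod_restrict]
    exact hW.1.aestronglyMeasurable (measurableSet_Ioi.prod measurableSet_Ioi)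
  have hm : AEStronglyMeasurable (fun y => betaW W f y / y * exp (-y))
      (volume.restrict (Ioi x)) := by
    simp_rw [div_eq_mul_inv]
    refine ((hm0.mono_measure (Measure.restrict_mono hsub le_rfl)).mul ?_).mul ?_
    · exact Measurable.aestronglyMeasurable (by fun_prop)
    · exact Measurable.aestronglyMeasurable (by fun_prop)
  have hb : ∀ᵐ y ∂(volume.restrict (Ioi x)), ‖betaW W f y / y * exp (-y)‖ ≤
      RR α y * Xnorm (-α) β f := by
    filter_upwards [ae_restrict_mem measurableSet_Ioi] with y hy
    have hy0 : 0 < y := hsub hy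
    have h := (Wint hW hα hβ hfm hf hy0).2
    rw [Real.norm_eq_abs, abs_mul, abs_div, abs_of_pos hy0, abs_of_pos (exp_pos _)]
    calc |betaW W f y| / y * exp (-y)
        ≤ (y ^ α + y ^ (-α)) * Xnorm (-α) β f / y * exp (-y) := by gcongr
      _ = _ := by unfold RR; ring
  have hi := (RR_int hα hx).mul_const (Xnorm (-α) β f)
  refine ⟨Integrable.mono' hi hm hb, ?_⟩
  have := norm_integral_le_of_norm_le hi hb
  rwa [integral_mul_const] at this

theorem stmt16 (α β : ℝ) (hα : α ∈ Ioo (0:ℝ) 1) (hβ : β ∈ Ioo (1 + α) 2)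
    (W : ℝ → ℝ → ℝ) (hW : GoodW α W) :
    ∃ εstar > (0:ℝ), ∃ C > (0:ℝ), ∀ ε : ℝ, 0 < ε → ε ≤ εstar →
      ∀ φ₁ φ₂ : ℝ → ℝ, IsProfile (Kern ε W) φ₁ → IsNormalised φ₁ →
        IsProfile (Kern ε W) φ₂ → IsNormalised φ₂ →
        ∀ x : ℝ, 0 < x →
          |Phi ε W φ₁ x - Phi ε W φ₂ x| ≤
            C * ε * weight (-α) (α - 1) x * exp (-x) *
              Xnorm (-α) β (fun y => φ₁ y - φ₂ y) := by
  have hα0 := hα.1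
  have hα1 : 0 < 1 - α := sub_pos.2 hα.2
  refine ⟨(1-α)^2/16*((1-α)/4)^(2-α), by positivity, 2 / α + 2, by positivity, ?_⟩
  intro ε hε hε' φ₁ φ₂ hp1 hn1 hp2 hn2 x hx
  have hX1 := prof_memX hW hα hβ hε.le hε' hp1 hn1
  have hX2 := prof_memX hW hα hβ hε.le hε' hp2 hn2
  have hm1 := hp1.1.aestronglyMeasurable
  have hm2 := hp2.1.aestronglyMeasurable
  have hX : MemX (-α) β (fun y => φ₁ y - φ₂ y) := by
    have := Integrable.sub hX1 hX2
    refine this.congr (Eventually.of_forall fun z => ?_)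
    simp only [Pi.sub_apply]
    ring
  have hm : AEStronglyMeasurable (fun y => φ₁ y - φ₂ y) (volume.restrict (Ioi (0:ℝ))) :=
    hm1.sub hm2
  have h := (phi_int hW hα hβ hm hX hx).2
  have hN : 0 ≤ Xnorm (-α) β (fun y => φ₁ y - φ₂ y) := by
    unfold Xnorm
    apply setIntegral_nonneg measurableSet_Ioi
    intro z hz
    exact mul_nonneg (abs_nonneg _) (weight_nonneg hz)
  have e : Phi ε W φ₁ x - Phi ε W φ₂ x =
      ε * ∫ y in Ioi x, betaW W (fun y => φ₁ y - φ₂ y) y / y * exp (-y) := by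
    unfold Phi
    rw [← mul_sub, ← integral_sub (phi_int hW hα hβ hm1 hX1 hx).1 (phi_int hW hα hβ hm2 hX2 hx).1]
    congr 1
    apply setIntegral_congr_fun measurableSet_Ioi
    intro y hy
    have hy0 : 0 < y := hx.trans hy
    have : betaW W (fun y => φ₁ y - φ₂ y) y = betaW W φ₁ y - betaW W φ₂ y := by
      unfold betaW
      rw [← integral_sub (Wint hW hα hβ hm1 hX1 hy0).1 (Wint hW hα hβ hm2 hX2 hy0).1]
      simp_rw [mul_sub]
    simp only [this]
    ring
  rw [e, abs_mul, abs_of_pos hε]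
  calc _ ≤ ε * ((∫ y in Ioi x, RR α y) * Xnorm (-α) β (fun y => φ₁ y - φ₂ y)) := by gcongr
    _ ≤ ε * (((2 / α + 2) * weight (-α) (α - 1) x * exp (-x)) *
        Xnorm (-α) β (fun y => φ₁ y - φ₂ y)) := by
      gcongr
      exact RR_bound hα hx
    _ = _ := by ring
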